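/- For all integers d ≥ 1 and n ≥ 1, the second homotopy group π_2(SP^d(ℂP^n)) is isomorphic to ℤ. -/

import Mathlib

open scoped Topology

/-- Complex projective `n`-space `ℂP^n`: the quotient of `ℂ^{n+1} ∖ {0}` by the scalar
action of `ℂ*`, with the quotient topology. -/
def CP (n : ℕ) : Type := Projectivization ℂ (Fin (n + 1) → ℂ)

instance (n : ℕ) : TopologicalSpace (CP n) :=
  inferInstanceAs (TopologicalSpace (Quotient (projectivizationSetoid ℂ (Fin (n + 1) → ℂ))))

/-- The setoid on `X^d` identifying tuples up to the permutation action of the symmetric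
group on `d` letters. -/
def SPSetoid (X : Type) (d : ℕ) : Setoid (Fin d → X) where
  r f g := ∃ σ : Equiv.Perm (Fin d), f ∘ σ = g
  iseqv := by
    refine ⟨fun f => ⟨Equiv.refl _, rfl⟩, ?_, ?_⟩
    · rintro f g ⟨σ, rfl⟩
      exact ⟨σ.symm, by funext i; simp⟩
    · rintro f g h ⟨σ, rfl⟩ ⟨τ, rfl⟩
      exact ⟨τ.trans σ, rfl⟩

/-- The `d`-th symmetric product `SP^d(X)`: the quotient of `X^d` by the permutation action
of the symmetric group on `d` letters, with the quotient topology. -/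
def SP (X : Type) [TopologicalSpace X] (d : ℕ) : Type := Quotient (SPSetoid X d)

instance (X : Type) [TopologicalSpace X] (d : ℕ) : TopologicalSpace (SP X d) :=
  inferInstanceAs (TopologicalSpace (Quotient (SPSetoid X d)))

namespace PiTwo
open scoped unitInterval Topology.Homotopy
/-- The unit square. -/
abbrev Sq := Fin 2 → I

noncomputable def rad (u : Sq) : ℝ := max |2 * (u 0 : ℝ) - 1| |2 * (u 1 : ℝ) - 1|

noncomputable def ex (r : ℝ) (u : Sq) : Sq := fun i =>
  Set.projIcc 0 1 zero_le_one (1 / 2 + (1 + r) * ((u i : ℝ) - 1 / 2))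

lemma continuous_rad : Continuous rad := by unfold rad; fun_prop

lemma continuous_ex : Continuous fun p : ℝ × Sq => ex p.1 p.2 := by
  unfold ex
  refine continuous_pi fun i => continuous_projIcc.comp ?_
  fun_prop

lemma rad_le (u : Sq) : rad u ≤ 1 := by
  have h0 := (u 0).2; have h1 := (u 1).2
  simp only [Set.mem_Icc] at h0 h1
  refine max_le (abs_le.2 ⟨by linarith, by linarith⟩) (abs_le.2 ⟨by linarith, by linarith⟩)

lemma rad_nonneg (u : Sq) : 0 ≤ rad u := le_max_of_le_left (abs_nonneg _)

lemma rad_boundary {u : Sq} (hu : u ∈ Cube.boundary (Fin 2)) : rad u = 1 := by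
  refine le_antisymm (rad_le u) ?_
  obtain ⟨i, hi⟩ := hu
  unfold rad
  fin_cases i
  · refine le_max_of_le_left ?_
    rcases hi with hi | hi <;> simp at hi <;> simp [hi] <;> norm_num
  · refine le_max_of_le_right ?_
    rcases hi with hi | hi <;> simp at hi <;> simp [hi] <;> norm_num

lemma ex_zero (u : Sq) : ex 0 u = u := by
  funext i
  simp [ex]

lemma ex_boundary {r : ℝ} {u : Sq} (_hr : 0 ≤ r) (h : 1 ≤ (1 + r) * rad u) :
    ex r u ∈ Cube.boundary (Fin 2) := by
  have key : ∀ i, 1 ≤ (1 + r) * |2 * (u i : ℝ) - 1| → ex r u ∈ Cube.boundary (Fin 2) := by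
    intro i hi
    refine ⟨i, ?_⟩
    rcases le_total 0 (2 * (u i : ℝ) - 1) with h | h
    · right
      rw [abs_of_nonneg h] at hi
      exact Set.projIcc_of_right_le _ (by nlinarith)
    · left
      rw [abs_of_nonpos h] at hi
      exact Set.projIcc_of_le_left _ (by nlinarith)
  unfold rad at h
  rcases max_choice |2 * (u 0 : ℝ) - 1| |2 * (u 1 : ℝ) - 1| with h' | h' <;> rw [h'] at h
  · exact key 0 h
  · exact key 1 h

variable {X : Type*} [TopologicalSpace X]

/-- A free null-homotopy (constant on the boundary at each time) gives a based one. -/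
theorem null_of_free {x : X} (f : Ω^ (Fin 2) X x) (H : I × Sq → X) (hH : Continuous H)
    (γ : I → X) (h0 : ∀ u, H (0, u) = f u)
    (hb : ∀ s, ∀ u ∈ Cube.boundary (Fin 2), H (s, u) = γ s) (h1 : ∀ u, H (1, u) = γ 1) :
    GenLoop.Homotopic f GenLoop.const := by
  have hbd : ∃ u : Sq, u ∈ Cube.boundary (Fin 2) := ⟨fun _ => 0, 0, Or.inl rfl⟩
  obtain ⟨u₀, hu₀⟩ := hbd
  have hγ : Continuous γ := by
    have : γ = fun s => H (s, u₀) := by funext s; rw [hb s u₀ hu₀]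
    rw [this]; fun_prop
  have hγ0 : γ 0 = x := by rw [← hb 0 u₀ hu₀, h0]; exact f.2 _ hu₀
  let ρ : Sq → I := fun u => Set.projIcc 0 1 zero_le_one (2 * (1 - rad u))
  have hρ : Continuous ρ := continuous_projIcc.comp (by have := continuous_rad; fun_prop)
  have hρb : ∀ u ∈ Cube.boundary (Fin 2), ρ u = 0 := by
    intro u hu
    simp [ρ, rad_boundary hu]
  have hex := continuous_ex
  let g : Ω^ (Fin 2) X x := ⟨⟨fun u => γ (ρ u), by fun_prop⟩, fun u hu => by
    simp [hρb u hu, hγ0]⟩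
  have e1 : GenLoop.Homotopic f g := by
    refine ⟨⟨⟨⟨fun p => H (min p.1 (ρ p.2), ex (p.1 : ℝ) p.2), ?_⟩, ?_, ?_⟩, ?_⟩⟩
    · refine hH.comp (Continuous.prodMk (by fun_prop) ?_)
      exact hex.comp (f := fun p : I × Sq => ((p.1 : ℝ), p.2)) (by fun_prop)
    · intro u
      have : min (0 : I) (ρ u) = 0 := min_eq_left (unitInterval.nonneg' )
      simp [this, ex_zero, h0]
    · intro u
      have h2 : min (1 : I) (ρ u) = ρ u := min_eq_right (unitInterval.le_one')
      simp only [h2]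
      change H (ρ u, ex ((1:I):ℝ) u) = γ (ρ u)
      by_cases h : 1 ≤ (1 + ((1:I):ℝ)) * rad u
      · exact hb _ _ (ex_boundary (by simp) h)
      · push Not at h
        have : ρ u = 1 := Set.projIcc_of_right_le _ (by simp at h; linarith)
        rw [this, h1]
    · intro s u hu
      have h2 : min s (ρ u) = 0 := by rw [hρb u hu]; exact min_eq_right (unitInterval.nonneg')
      simp only [ContinuousMap.coe_mk, h2]
      rw [hb 0 _ (ex_boundary s.2.1 (by rw [rad_boundary hu]; have := s.2.1; linarith)), hγ0]
      exact (f.2 u hu).symm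
  have e2 : GenLoop.Homotopic (GenLoop.const) g := by
    refine ⟨⟨⟨⟨fun p => γ (p.1 * ρ p.2), by fun_prop⟩, ?_, ?_⟩, ?_⟩⟩
    · intro u; simp [hγ0]
    · intro u; simp [g]
    · intro s u hu
      simp [hρb u hu, hγ0]
  exact e1.trans e2.symm

/-- Dragging the base point along a path. -/
theorem drag {x : X} (f : Ω^ (Fin 2) X x) (γ : I → X) (hγ : Continuous γ) (hγ0 : γ 0 = x) :
    ∃ H : I × Sq → X, Continuous H ∧ (∀ u, H (0, u) = f u) ∧
      (∀ s, ∀ u ∈ Cube.boundary (Fin 2), H (s, u) = γ s) := by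
  have hex := continuous_ex
  have hrad := continuous_rad
  have hf : Continuous (f : Sq → X) := f.1.2
  refine ⟨fun p => if (1 + (p.1 : ℝ)) * rad p.2 ≤ 1 then f (ex (p.1 : ℝ) p.2) else
    γ (Set.projIcc 0 1 zero_le_one ((1 + (p.1 : ℝ)) * rad p.2 - 1)), ?_, ?_, ?_⟩
  · refine Continuous.if_le ?_ ?_ (by fun_prop) (by fun_prop) ?_
    · exact hf.comp (hex.comp (f := fun p : I × Sq => ((p.1 : ℝ), p.2)) (by fun_prop))
    · exact hγ.comp (continuous_projIcc.comp (by fun_prop))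
    · intro p hp
      have : f (ex (p.1 : ℝ) p.2) = x := f.2 _ (ex_boundary p.1.2.1 hp.ge)
      rw [this, hp, ← hγ0]
      simp
  · intro u
    have : (1 + ((0:I) : ℝ)) * rad u ≤ 1 := by simpa using rad_le u
    simp only [this, if_true]
    simp [ex_zero]
  · intro s u hu
    simp only [rad_boundary hu, mul_one]
    split_ifs with h
    · have hs : s = 0 := by
        exact le_antisymm (show (s : ℝ) ≤ 0 by linarith) s.2.1
      subst hs
      rw [hγ0]
      simpa [ex_zero] using f.2 u hu
    · congr 1
      simp

end PiTwo

namespace PiTwo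
open scoped unitInterval Topology.Homotopy
theorem null_punctured {E : Type*} [NormedAddCommGroup E] [NormedSpace ℝ E]
    [FiniteDimensional ℝ E] (hE : 3 < Module.finrank ℝ E) (e : {v : E // v ≠ 0})
    (f : Ω^ (Fin 2) {v : E // v ≠ 0} e) : GenLoop.Homotopic f GenLoop.const := by
  have hf : Continuous (f : Sq → {v : E // v ≠ 0}) := f.1.2
  obtain ⟨m, hm0, hm⟩ : ∃ m : ℝ, 0 < m ∧ ∀ u, m ≤ ‖(f u : E)‖ := by
    obtain ⟨u, -, hu⟩ := isCompact_univ.exists_isMinOn (Set.univ_nonempty (α := Sq))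
      (f := fun u => ‖(f u : E)‖) (by fun_prop)
    exact ⟨‖(f u : E)‖, norm_pos_iff.2 (f u).2, fun v => hu (Set.mem_univ v)⟩
  have hfb : ∀ u ∈ Cube.boundary (Fin 2), f u = e := f.2
  have hme : m ≤ ‖(e : E)‖ := by
    have := hm (fun _ => 0)
    rwa [hfb _ ⟨0, Or.inl rfl⟩] at this
  let ε := m / 4
  have hε : 0 < ε := by positivity
  let P : ℝ × ℝ → Sq := fun p => ![Set.projIcc 0 1 zero_le_one p.1, Set.projIcc 0 1 zero_le_one p.2]
  have hP : Continuous P := by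
    refine continuous_pi fun i => ?_
    fin_cases i
    · exact (continuous_projIcc (h := zero_le_one)).comp continuous_fst
    · exact (continuous_projIcc (h := zero_le_one)).comp continuous_snd
  obtain ⟨g, hg, hgd, -⟩ := Continuous.exists_contDiff_approx (E := ℝ × ℝ)
    (f := fun p => (f (P p) : E)) 1 (by fun_prop) (ε := fun _ => ε) (by fun_prop) (fun _ => hε)
  have hdense := ContDiff.dense_compl_range_of_finrank_lt_finrank (E := ℝ × ℝ × ℝ) (F := E)
    (f := fun p => p.1 • g p.2) (by
      have : ContDiff ℝ 1 g := by exact_mod_cast hg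
      fun_prop) (by simpa using hE)
  obtain ⟨w, hw, hwd⟩ := Metric.dense_iff.1 hdense (-(e : E)) ε hε
  have hwd' : ∀ (c : ℝ) p, w ≠ c • g p := fun c p h => hwd ⟨(c, p), h.symm⟩
  have hw' : ‖w + (e : E)‖ < ε := by simpa [dist_eq_norm] using hw
  have hw0 : w ≠ 0 := by simpa using hwd' 0 0
  let Q : Sq → ℝ × ℝ := fun u => ((u 0 : ℝ), (u 1 : ℝ))
  have hPQ : ∀ u, P (Q u) = u := by
    intro u; funext i; fin_cases i <;> simp [P, Q]
  let χ : Sq → ℝ := fun u => min 1 (‖(f u : E) - e‖ / ε)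
  have hχ : Continuous χ := by fun_prop
  have hχ0 : ∀ u, 0 ≤ χ u := fun u => le_min zero_le_one (by positivity)
  have hχ1 : ∀ u, χ u ≤ 1 := fun u => min_le_left _ _
  have hgc : Continuous g := hg.continuous
  have hQ : Continuous Q := by fun_prop
  have hgf : ∀ u, ‖g (Q u) - (f u : E)‖ < ε := by
    intro u
    have := hgd (Q u)
    simpa [dist_eq_norm, hPQ] using this
  have hχb : ∀ u ∈ Cube.boundary (Fin 2), χ u = 0 := by
    intro u hu; simp [χ, hfb u hu]
  let f' : Sq → E := fun u => (f u : E) + χ u • (g (Q u) - (f u : E))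
  have hf'c : Continuous f' := by fun_prop
  have hclose : ∀ (s : ℝ) u, 0 ≤ s → s ≤ 1 → ‖s • (χ u • (g (Q u) - (f u : E)))‖ < ε := by
    intro s u hs0 hs1
    rw [norm_smul, norm_smul, Real.norm_of_nonneg hs0, Real.norm_of_nonneg (hχ0 u), ← mul_assoc]
    have h1 : s * χ u ≤ 1 := mul_le_one₀ hs1 (hχ0 u) (hχ1 u)
    have h2 := norm_nonneg (g (Q u) - (f u : E))
    have := hgf u
    nlinarith
  have hne : ∀ (s : ℝ) u, 0 ≤ s → s ≤ 1 → (f u : E) + s • (χ u • (g (Q u) - (f u : E))) ≠ 0 := by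
    intro s u h0 h1 h
    have h2 := hclose s u h0 h1
    rw [← neg_eq_of_add_eq_zero_right h, norm_neg] at h2
    have := hm u
    simp only [ε] at h2
    linarith
  have hf'0 : ∀ u, f' u ≠ 0 := fun u => by simpa using hne 1 u zero_le_one le_rfl
  have hf'w : ∀ u (c : ℝ), 0 ≤ c → f' u ≠ c • w := by
    intro u c hc h
    rcases hc.eq_or_lt with rfl | hc
    · simp at h; exact hf'0 u h
    by_cases h1 : χ u = 1
    · refine hwd' c⁻¹ (Q u) ?_
      simp [f', h1] at h
      rw [h, inv_smul_smul₀ hc.ne']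
    · have h2 : ‖(f u : E) - e‖ < ε := by
        by_contra hcon
        push Not at hcon
        exact h1 (min_eq_left ((one_le_div hε).2 hcon))
      have h3 : ‖f' u - e‖ < 2 * ε := by
        have h4 := hclose 1 u zero_le_one le_rfl
        rw [one_smul] at h4
        have : f' u - e = ((f u : E) - e) + χ u • (g (Q u) - (f u : E)) := by simp only [f']; abel
        rw [this]
        calc _ ≤ _ := norm_add_le _ _
          _ < _ := by linarith
      have h5 : (1 + c) • (e : E) = c • (w + e) - (f' u - e) := by
        rw [h]; module
      have h6 : (1 + c) * ‖(e : E)‖ ≤ c * ‖w + (e : E)‖ + ‖f' u - e‖ := by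
        calc _ = ‖(1 + c) • (e : E)‖ := by
              rw [norm_smul, Real.norm_of_nonneg (by positivity)]
          _ ≤ ‖c • (w + (e : E))‖ + ‖f' u - e‖ := by rw [h5]; exact norm_sub_le _ _
          _ = _ := by rw [norm_smul, Real.norm_of_nonneg hc.le]
      have h7 : c * ‖w + (e : E)‖ ≤ c * ε := by gcongr
      have h8 : (1 + c) * m ≤ (1 + c) * ‖(e : E)‖ := by gcongr
      simp only [ε] at *
      nlinarith
  let F' : Ω^ (Fin 2) {v : E // v ≠ 0} e := ⟨⟨fun u => ⟨f' u, hf'0 u⟩, by fun_prop⟩, fun u hu => by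
    apply Subtype.ext
    simp [f', hχb u hu, hfb u hu]⟩
  have e1 : GenLoop.Homotopic f F' := by
    refine ⟨⟨⟨⟨fun p => ⟨(f p.2 : E) + (p.1 : ℝ) • (χ p.2 • (g (Q p.2) - (f p.2 : E))),
      hne _ _ p.1.2.1 p.1.2.2⟩, ?_⟩, ?_, ?_⟩, ?_⟩⟩
    · refine Continuous.subtype_mk ?_ _
      fun_prop
    · intro u; simp
    · intro u; simp [F', f']
    · intro s u hu
      apply Subtype.ext
      simp [hχb u hu]
  refine e1.trans ?_
  have hne2 : ∀ (s : I) u, (1 - (s : ℝ)) • f' u - (s : ℝ) • w ≠ 0 := by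
    intro s u h
    rcases s.2.2.eq_or_lt with h1 | h1
    · rw [h1] at h; simp at h; exact hw0 h
    · have h2 : 0 < 1 - (s : ℝ) := by linarith
      refine hf'w u ((1 - (s : ℝ))⁻¹ * (s : ℝ)) (mul_nonneg (by positivity) s.2.1) ?_
      rw [mul_smul, ← sub_eq_zero.1 h, inv_smul_smul₀ h2.ne']
  have hf'b : ∀ u ∈ Cube.boundary (Fin 2), f' u = e := fun u hu => by simp [f', hχb u hu, hfb u hu]
  have hb0 : (fun _ => 0 : Sq) ∈ Cube.boundary (Fin 2) := ⟨0, Or.inl rfl⟩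
  refine null_of_free F' (fun p => ⟨(1 - (p.1 : ℝ)) • f' p.2 - (p.1 : ℝ) • w, hne2 _ _⟩)
    (Continuous.subtype_mk (by fun_prop) _)
    (fun s => ⟨(1 - (s : ℝ)) • (e : E) - (s : ℝ) • w, by
      have := hne2 s (fun _ => 0); rwa [hf'b _ hb0] at this⟩) ?_ ?_ ?_
  · intro u; apply Subtype.ext; simp [F']; rfl
  · intro s u hu; apply Subtype.ext; simp [hf'b u hu]
  · intro u; apply Subtype.ext; simp

end PiTwo

namespace PiTwo
open scoped unitInterval Topology.Homotopy
lemma log_path (ν : I → ℂ) (hν : Continuous ν) (h0 : ∀ t, ν t ≠ 0) (z : ℂ)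
    (hz : Complex.exp z = ν 0) :
    ∃ u : I → ℂ, Continuous u ∧ (∀ t, Complex.exp (u t) = ν t) ∧ u 0 = z := by
  let γ : C(I, {z : ℂ // z ≠ 0}) := ⟨fun t => ⟨ν t, h0 t⟩, by fun_prop⟩
  obtain ⟨u, hu, hu0⟩ := Complex.isCoveringMap_exp.exists_path_lifts γ z (Subtype.ext hz.symm)
  exact ⟨u, u.continuous, fun t => congrArg Subtype.val (congrFun hu t), hu0⟩

lemma log_square (ν : I × I → ℂ) (hν : Continuous ν) (h0 : ∀ t, ν t ≠ 0) :
    ∃ u : I × I → ℂ, Continuous u ∧ (∀ t, Complex.exp (u t) = ν t) := by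
  obtain ⟨w, hw, hw1, -⟩ := log_path (fun t => ν (0, t)) (by fun_prop) (fun t => h0 _)
    (Complex.log (ν (0, 0))) (Complex.exp_log (h0 _))
  let H : C(I × I, {z : ℂ // z ≠ 0}) := ⟨fun t => ⟨ν t, h0 t⟩, by fun_prop⟩
  have hH0 : ∀ a, H (0, a) = ⟨Complex.exp (w a), Complex.exp_ne_zero _⟩ := by
    intro a; apply Subtype.ext; exact (hw1 a).symm
  have := Complex.isCoveringMap_exp.liftHomotopy_lifts H ⟨w, hw⟩ hH0
  exact ⟨_, (Complex.isCoveringMap_exp.liftHomotopy H ⟨w, hw⟩ hH0).continuous,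
    fun t => congrArg Subtype.val (congrFun this t)⟩

lemma exp_one_const (g : I → ℂ) (hg : Continuous g) (h1 : ∀ t, Complex.exp (g t) = 1) :
    g 0 = g 1 := by
  have := Complex.isCoveringMap_exp.eq_of_comp_eq (A := I) (g₁ := g) (g₂ := fun _ => g 0) hg
    continuous_const (by funext t; apply Subtype.ext; simp [h1]) 0 rfl
  exact (congrFun this 1).symm

lemma wind_unique (ν : I × I → ℂ) (hν : Continuous ν) (h0 : ∀ t, ν t ≠ 0)
    (hp : ∀ τ, ν (τ, 0) = ν (τ, 1)) (u v : I → ℂ) (hu : Continuous u) (hv : Continuous v)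
    (hu0 : ∀ t, Complex.exp (u t) = ν (0, t)) (hv1 : ∀ t, Complex.exp (v t) = ν (1, t)) :
    u 1 - u 0 = v 1 - v 0 := by
  obtain ⟨w, hw, hwe⟩ := log_square ν hν h0
  have a1 := exp_one_const (fun t => w (0, t) - u t) (by fun_prop) (fun t => by
    rw [Complex.exp_sub, hwe, hu0, div_self (h0 _)])
  have a2 := exp_one_const (fun t => w (1, t) - v t) (by fun_prop) (fun t => by
    rw [Complex.exp_sub, hwe, hv1, div_self (h0 _)])
  have a3 := exp_one_const (fun t => w (t, 1) - w (t, 0)) (by fun_prop) (fun t => by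
    rw [Complex.exp_sub, hwe, hwe, hp, div_self (h0 _)])
  linear_combination a1 - a2 + a3

section lift
variable {V : Type*} [NormedAddCommGroup V] [NormedSpace ℂ V]

lemma lift_exists {K : Type*} [PseudoMetricSpace K] [CompactSpace K]
    (Q : I × K → V →L[ℂ] V) (hQ : Continuous Q) (hi : ∀ p v, Q p (Q p v) = Q p v)
    (e : K → V) (he : Continuous e) (hQe : ∀ k, Q (0, k) (e k) = e k) (he0 : ∀ k, e k ≠ 0) :
    ∃ F : I × K → V, Continuous F ∧ (∀ k, F (0, k) = e k) ∧ (∀ p, Q p (F p) = F p) ∧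
      (∀ p, F p ≠ 0) ∧ ∀ k, (∀ s, Q (s, k) = Q (0, k)) → ∀ s, F (s, k) = e k := by
  have huc := CompactSpace.uniformContinuous_of_continuous hQ
  obtain ⟨δ, hδ, hd⟩ := Metric.uniformContinuous_iff.1 huc 1 one_pos
  obtain ⟨N, hN⟩ := exists_nat_one_div_lt hδ
  let c : ℕ → I → I := fun j s => Set.projIcc 0 1 zero_le_one (min (s : ℝ) (j / (N + 1)))
  have hc : ∀ j s, ((c j s : I) : ℝ) = min (s : ℝ) (j / (N + 1)) := by
    intro j s
    have : min (s : ℝ) (j / (N + 1)) ∈ Set.Icc (0 : ℝ) 1 :=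
      ⟨le_min s.2.1 (by positivity), (min_le_left _ _).trans s.2.2⟩
    simp only [c, Set.projIcc_of_mem _ this]
  have hcc : ∀ j, Continuous (c j) := fun j => continuous_projIcc.comp (by fun_prop)
  have hc0 : ∀ s, c 0 s = 0 := fun s => Subtype.ext (by rw [hc]; simp [s.2.1])
  have hcz : ∀ j, c j 0 = 0 := fun s => Subtype.ext (by rw [hc]; simp; positivity)
  have key : ∀ j : ℕ, ∃ F : I × K → V, Continuous F ∧ (∀ k, F (0, k) = e k) ∧
      (∀ p, Q (c j p.1, p.2) (F p) = F p) ∧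
      (∀ p, F p ≠ 0) ∧ ∀ k, (∀ s, Q (s, k) = Q (0, k)) → ∀ s, F (s, k) = e k := by
    intro j
    induction j with
    | zero =>
      refine ⟨fun p => e p.2, by fun_prop, fun k => rfl, fun p => ?_, fun p => he0 _,
        fun k _ s => rfl⟩
      rw [hc0]; exact hQe _
    | succ j ih =>
      obtain ⟨F, h1, h2, h3, h4, h5⟩ := ih
      refine ⟨fun p => Q (c (j + 1) p.1, p.2) (F p), ?_, ?_, ?_, ?_, ?_⟩
      · have : Continuous fun p : I × K => Q (c (j + 1) p.1, p.2) := by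
          have := hcc (j + 1)
          fun_prop
        exact this.clm_apply h1
      · intro k; simp only [hcz, h2, hQe]
      · intro p; simp only [hi]
      · intro p h0
        have hdd : ‖Q (c j p.1, p.2) - Q (c (j + 1) p.1, p.2)‖ < 1 := by
          rw [← dist_eq_norm]
          apply hd
          rw [Prod.dist_eq, dist_self, max_eq_left dist_nonneg, Subtype.dist_eq, hc, hc,
            Real.dist_eq]
          refine lt_of_le_of_lt (abs_min_sub_min_le_max _ _ _ _) ?_
          have : (j : ℝ) / (N + 1) - ((j + 1 : ℕ) : ℝ) / (N + 1) = - (1 / (N + 1)) := by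
            push_cast; ring
          rw [this, sub_self, abs_zero, abs_neg, abs_of_nonneg (by positivity)]
          exact max_lt hδ hN
        have := ContinuousLinearMap.le_opNorm (Q (c j p.1, p.2) - Q (c (j + 1) p.1, p.2)) (F p)
        beta_reduce at h0
        rw [sub_apply, h3, h0, sub_zero] at this
        have hp : 0 < ‖F p‖ := norm_pos_iff.2 (h4 p)
        nlinarith
      · intro k hk s
        simp only [h5 k hk, hk, hQe]
  obtain ⟨F, h1, h2, h3, h4, h5⟩ := key (N + 1)
  refine ⟨F, h1, h2, fun p => ?_, h4, h5⟩
  have : c (N + 1) p.1 = p.1 := Subtype.ext (by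
    rw [hc, min_eq_left]
    push_cast
    rw [div_self (by positivity)]
    exact p.1.2.2)
  have h := h3 p
  rwa [this] at h
end lift

section ratio
variable {V : Type*} [NormedAddCommGroup V] [InnerProductSpace ℂ V]

lemma ratio_exists {K : Type*} [TopologicalSpace K] (F G : K → V) (hF : Continuous F)
    (hG : Continuous G) (hF0 : ∀ k, F k ≠ 0) (hG0 : ∀ k, G k ≠ 0) (h : ∀ k, ∃ c : ℂ, G k = c • F k) :
    ∃ μ : K → ℂ, Continuous μ ∧ (∀ k, μ k ≠ 0) ∧ ∀ k, G k = μ k • F k := by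
  have key : ∀ k, G k = (inner ℂ (F k) (G k) / inner ℂ (F k) (F k)) • F k := by
    intro k
    obtain ⟨c, hc⟩ := h k
    have : inner ℂ (F k) (F k) ≠ 0 := inner_self_ne_zero.2 (hF0 k)
    rw [hc, inner_smul_right, mul_div_assoc, div_self this, mul_one]
  refine ⟨fun k => inner ℂ (F k) (G k) / inner ℂ (F k) (F k), ?_, ?_, key⟩
  · exact (hF.inner hG).div (hF.inner hF) fun k => inner_self_ne_zero.2 (hF0 k)
  · intro k h0
    apply hG0 k
    beta_reduce at h0
    rw [key k, h0, zero_smul]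
end ratio

end PiTwo

namespace PiTwo
open scoped unitInterval Topology.Homotopy
/-- A continuous family of lines in `V`, given by projections. -/
structure LineFam (X V : Type*) [TopologicalSpace X] [NormedAddCommGroup V]
    [InnerProductSpace ℂ V] where
  P : X → V →L[ℂ] V
  cont : Continuous P
  idem : ∀ x v, P x (P x v) = P x v
  rank : ∀ x v w, P x v = v → P x w = w → v ≠ 0 → ∃ c : ℂ, w = c • v
  exists_ne : ∀ x, ∃ v, v ≠ 0 ∧ P x v = v

variable {X V : Type*} [TopologicalSpace X] [NormedAddCommGroup V] [InnerProductSpace ℂ V]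

def Deg (L : LineFam X V) (f : Sq → X) (e : V) (k : ℤ) : Prop :=
  ∃ F : I × I → V, Continuous F ∧ (∀ p : I × I, L.P (f ![p.1, p.2]) (F p) = F p) ∧
    (∀ p, F p ≠ 0) ∧ (∀ t, F (0, t) = e) ∧ (∀ s, F (s, 0) = e) ∧ (∀ s, F (s, 1) = e) ∧
    ∃ u : I → ℂ, Continuous u ∧ u 0 = 0 ∧ u 1 = k * (2 * Real.pi * Complex.I) ∧
      ∀ t, F (1, t) = Complex.exp (u t) • e

lemma cont_vec : Continuous fun p : I × I => (![p.1, p.2] : Sq) := by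
  refine continuous_pi fun i => ?_
  fin_cases i
  · exact continuous_fst
  · exact continuous_snd

lemma bd_zero (t : I) : (![0, t] : Sq) ∈ Cube.boundary (Fin 2) := ⟨0, Or.inl rfl⟩
lemma bd_one (t : I) : (![1, t] : Sq) ∈ Cube.boundary (Fin 2) := ⟨0, Or.inr rfl⟩
lemma bd_zero' (t : I) : (![t, 0] : Sq) ∈ Cube.boundary (Fin 2) := ⟨1, Or.inl rfl⟩
lemma bd_one' (t : I) : (![t, 1] : Sq) ∈ Cube.boundary (Fin 2) := ⟨1, Or.inr rfl⟩

lemma deg_family (L : LineFam X V) (H : I × Sq → X) (hH : Continuous H) (γ : I → X)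
    (hb : ∀ s, ∀ u ∈ Cube.boundary (Fin 2), H (s, u) = γ s) (e : V) (he : e ≠ 0)
    (hPe : L.P (γ 0) e = e) :
    ∃ (k : ℤ) (e' : V), e' ≠ 0 ∧ L.P (γ 1) e' = e' ∧ Deg L (fun u => H (0, u)) e k ∧
      Deg L (fun u => H (1, u)) e' k := by
  have hγ : Continuous γ := by
    have : γ = fun s => H (s, ![0, 0]) := by
      funext s; exact (hb s _ (bd_zero 0)).symm
    rw [this]; fun_prop
  have hLc := L.cont
  obtain ⟨E, E1, E2, E3, E4, -⟩ := lift_exists (K := Unit) (fun p => L.P (γ p.1)) (by fun_prop)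
    (fun p v => L.idem _ _) (fun _ => e) (by fun_prop) (fun _ => hPe) (fun _ => he)
  have hvec : Continuous fun p : I × (I × I) => (![p.1, p.2.2] : Sq) :=
    cont_vec.comp (by fun_prop : Continuous fun p : I × (I × I) => (p.1, p.2.2))
  obtain ⟨F, F1, F2, F3, F4, F5⟩ := lift_exists (K := I × I)
    (fun p => L.P (H (p.2.1, ![p.1, p.2.2]))) (by fun_prop)
    (fun p v => L.idem _ _) (fun q => E (q.1, ())) (by fun_prop) (fun q => by
      rw [hb _ _ (bd_zero _)]; exact E3 (q.1, ())) (fun q => E4 _)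
  have F50 : ∀ τ s, F (s, τ, 0) = E (τ, ()) := fun τ s => F5 (τ, 0) (fun s => by
    simp only [hb _ _ (bd_zero' _)]) s
  have F51 : ∀ τ s, F (s, τ, 1) = E (τ, ()) := fun τ s => F5 (τ, 1) (fun s => by
    simp only [hb _ _ (bd_one' _)]) s
  obtain ⟨ν, n1, n2, n3⟩ := ratio_exists (K := I × I) (fun q => E (q.1, ())) (fun q => F (1, q))
    (by fun_prop) (by fun_prop) (fun q => E4 _) (fun q => F4 _) (fun q => by
      refine L.rank (γ q.1) _ _ (E3 (q.1, ())) ?_ (E4 _)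
      have := F3 (1, q)
      simpa only [hb _ _ (bd_one _)] using this)
  have ν0 : ∀ τ, ν (τ, 0) = 1 := by
    intro τ
    have := n3 (τ, 0)
    rw [F50] at this
    have h2 : (ν (τ, 0) - 1) • E (τ, ()) = 0 := by rw [sub_smul, one_smul, ← this, sub_self]
    exact sub_eq_zero.1 ((smul_eq_zero.1 h2).resolve_right (E4 _))
  have ν1 : ∀ τ, ν (τ, 1) = 1 := by
    intro τ
    have := n3 (τ, 1)
    rw [F51] at this
    have h2 : (ν (τ, 1) - 1) • E (τ, ()) = 0 := by rw [sub_smul, one_smul, ← this, sub_self]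
    exact sub_eq_zero.1 ((smul_eq_zero.1 h2).resolve_right (E4 _))
  obtain ⟨u, u1, u2, u3⟩ := log_path (fun t => ν (0, t)) (by fun_prop) (fun t => n2 _) 0
    (by simp [ν0])
  obtain ⟨v, v1, v2, v3⟩ := log_path (fun t => ν (1, t)) (by fun_prop) (fun t => n2 _) 0
    (by simp [ν0])
  have huv := wind_unique ν n1 n2 (fun τ => by rw [ν0, ν1]) u v u1 v1 u2 v2
  rw [u3, v3, sub_zero, sub_zero] at huv
  obtain ⟨k, hk⟩ := Complex.exp_eq_one_iff.1 ((u2 1).trans (ν1 0))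
  have hE0 : E (0, ()) = e := E2 ()
  refine ⟨k, E (1, ()), E4 _, E3 (1, ()), ?_, ?_⟩
  · refine ⟨fun p => F (p.1, 0, p.2), by fun_prop, fun p => F3 (p.1, 0, p.2), fun p => F4 _,
      fun t => (F2 (0, t)).trans hE0, fun s => (F50 _ _).trans hE0, fun s => (F51 _ _).trans hE0,
      u, u1, u3, hk, fun t => ?_⟩
    rw [u2]; rw [← hE0]; exact n3 (0, t)
  · refine ⟨fun p => F (p.1, 1, p.2), by fun_prop, fun p => F3 (p.1, 1, p.2), fun p => F4 _,
      fun t => (F2 (1, t)), fun s => (F50 _ _), fun s => (F51 _ _),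
      v, v1, v3, huv ▸ hk, fun t => ?_⟩
    rw [v2]; exact n3 (1, t)

lemma deg_unique (L : LineFam X V) (f : Sq → X) {e e' : V} {k k' : ℤ} (h : Deg L f e k)
    (h' : Deg L f e' k') : k = k' := by
  obtain ⟨F, F1, F2, F3, F4, F5, F6, u, u1, u2, u3, u4⟩ := h
  obtain ⟨G, G1, G2, G3, G4, G5, G6, v, v1, v2, v3, v4⟩ := h'
  obtain ⟨μ, m1, m2, m3⟩ := ratio_exists F G F1 G1 F3 G3
    (fun p => L.rank _ _ _ (F2 p) (G2 p) (F3 p))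
  have he : e ≠ 0 := by rw [← F4 0]; exact F3 _
  obtain ⟨c, hc, hc0⟩ : ∃ c : ℂ, e' = c • e ∧ c ≠ 0 :=
    ⟨μ (0, 0), by rw [← G4 0, ← F4 0]; exact m3 _, m2 _⟩
  have inj : ∀ a b : ℂ, a • e = b • e → a = b := by
    intro a b hab
    have h2 : (a - b) • e = 0 := by rw [sub_smul, hab, sub_self]
    exact sub_eq_zero.1 ((smul_eq_zero.1 h2).resolve_right he)
  have w := wind_unique μ m1 m2 (fun τ => inj _ _ (by
      have a1 := m3 (τ, 0); have a2 := m3 (τ, 1)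
      rw [G5, F5] at a1; rw [G6, F6] at a2
      rw [← a1, ← a2])) (fun _ => Complex.log c) (fun t => Complex.log c + v t - u t)
      (by fun_prop) (by fun_prop) (fun t => by
        rw [Complex.exp_log hc0]
        apply inj
        rw [← hc, ← G4 t, ← F4 t]; exact m3 _) (fun t => by
        rw [Complex.exp_sub, Complex.exp_add, Complex.exp_log hc0]
        have a := m3 (1, t)
        rw [u4, v4, hc, smul_smul, smul_smul] at a
        have := inj _ _ a
        rw [div_eq_iff (Complex.exp_ne_zero _), ← this, mul_comm])
  rw [u2, v2, u3, v3] at w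
  have h2 : (k : ℂ) * (2 * Real.pi * Complex.I) = k' * (2 * Real.pi * Complex.I) := by
    linear_combination w
  exact_mod_cast mul_right_cancel₀ Complex.two_pi_I_ne_zero h2

lemma deg_exists (L : LineFam X V) {x : X} (f : Ω^ (Fin 2) X x) (e : V) (he : e ≠ 0)
    (hPe : L.P x e = e) : ∃ k, Deg L f e k := by
  obtain ⟨k, -, -, -, h, -⟩ := deg_family L (fun p => f p.2) (by fun_prop) (fun _ => x)
    (fun s u hu => f.2 u hu) e he hPe
  exact ⟨k, h⟩

lemma deg_ne_zero (L : LineFam X V) {f : Sq → X} {e : V} {k : ℤ} (h : Deg L f e k) : e ≠ 0 := by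
  obtain ⟨F, F1, F2, F3, F4, -⟩ := h
  rw [← F4 0]; exact F3 _

lemma deg_free (L : LineFam X V) (H : I × Sq → X) (hH : Continuous H) (γ : I → X)
    (hb : ∀ s, ∀ u ∈ Cube.boundary (Fin 2), H (s, u) = γ s) {e : V} {k : ℤ}
    (h : Deg L (fun u => H (0, u)) e k) :
    ∃ e', Deg L (fun u => H (1, u)) e' k := by
  have hPe : L.P (γ 0) e = e := by
    obtain ⟨F, F1, F2, F3, F4, -⟩ := h
    have := F2 (0, 0)
    beta_reduce at this
    rwa [F4, hb _ _ (bd_zero _)] at this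
  obtain ⟨l, e', -, -, h1, h2⟩ := deg_family L H hH γ hb e (deg_ne_zero L h) hPe
  rw [deg_unique L _ h h1]
  exact ⟨e', h2⟩

lemma deg_homotopic (L : LineFam X V) {x : X} {f g : Ω^ (Fin 2) X x} (hfg : GenLoop.Homotopic f g)
    {e : V} {k : ℤ} (h : Deg L f e k) : ∃ e', Deg L g e' k := by
  obtain ⟨H⟩ := hfg
  have := deg_free L (fun p => H p) (by fun_prop) (fun _ => x) (fun s u hu => by
    rw [H.eq_fst s hu]; exact f.2 u hu) (e := e) (k := k) (by simpa using h)
  simpa using this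

lemma deg_zero_lift (L : LineFam X V) {f : Sq → X} {e : V} (h : Deg L f e 0) :
    ∃ G : Sq → V, Continuous G ∧ (∀ p, L.P (f p) (G p) = G p) ∧ (∀ p, G p ≠ 0) ∧
      ∀ p ∈ Cube.boundary (Fin 2), G p = e := by
  obtain ⟨F, F1, F2, F3, F4, F5, F6, u, u1, u2, u3, u4⟩ := h
  have hv : ∀ p : Sq, ![p 0, p 1] = p := fun p => by
    funext i; fin_cases i <;> rfl
  refine ⟨fun p => Complex.exp (-((p 0 : ℝ) : ℂ) * u (p 1)) • F (p 0, p 1), by fun_prop, ?_, ?_, ?_⟩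
  · intro p
    have := F2 (p 0, p 1)
    simp only [hv] at this
    rw [map_smul, this]
  · intro p
    exact smul_ne_zero (Complex.exp_ne_zero _) (F3 _)
  · rintro p ⟨i, hi⟩
    fin_cases i
    · rcases hi with hi | hi
      · simp only [Fin.zero_eta] at hi; simp [hi, F4]
      · simp only [Fin.zero_eta] at hi; simp only [hi, u4, smul_smul, ← Complex.exp_add]; simp
    · rcases hi with hi | hi
      · simp only [Fin.mk_one] at hi; simp [hi, F5, u2]
      · simp only [Fin.mk_one] at hi; simp [hi, F6, u3]

lemma deg_trans (L : LineFam X V) {x : X} {f g : Ω^ (Fin 2) X x} {e : V} {k l : ℤ}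
    (hf : Deg L f e k) (hg : Deg L g e l) : Deg L (GenLoop.transAt 1 f g) e (k + l) := by
  obtain ⟨F, F1, F2, F3, F4, F5, F6, u, u1, u2, u3, u4⟩ := hf
  obtain ⟨G, G1, G2, G3, G4, G5, G6, v, v1, v2, v3, v4⟩ := hg
  let a : I → I := fun t => Set.projIcc 0 1 zero_le_one (2 * (t : ℝ))
  let b : I → I := fun t => Set.projIcc 0 1 zero_le_one (2 * (t : ℝ) - 1)
  have ha : Continuous a := continuous_projIcc.comp (by fun_prop)
  have hb : Continuous b := continuous_projIcc.comp (by fun_prop)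
  have ha1 : ∀ t : I, (t : ℝ) = 1 / 2 → a t = 1 := fun t ht => by simp [a, ht]
  have hb1 : ∀ t : I, (t : ℝ) = 1 / 2 → b t = 0 := fun t ht => by simp [b, ht]
  have ha0 : a 0 = 0 := by simp [a]
  have hb0 : b 1 = 1 := by simp [b]; norm_num
  have hn : ¬ ((1 : I) : ℝ) ≤ 1 / 2 := by norm_num
  have hn0 : ((0 : I) : ℝ) ≤ 1 / 2 := by norm_num
  refine ⟨fun p => if (p.2 : ℝ) ≤ 1 / 2 then F (p.1, a p.2) else G (p.1, b p.2), ?_, ?_, ?_, ?_,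
    ?_, ?_, fun t => if (t : ℝ) ≤ 1 / 2 then u (a t) else u 1 + v (b t), ?_, ?_, ?_, ?_⟩
  · refine Continuous.if_le (by fun_prop) (by fun_prop) (by fun_prop) (by fun_prop) ?_
    intro p hp
    rw [ha1 _ hp, hb1 _ hp, F6, G5]
  · intro p
    have hup : ∀ c : I, Function.update (![p.1, p.2] : Sq) 1 c = ![p.1, c] := by
      intro c; funext i; fin_cases i <;> simp
    have : GenLoop.transAt 1 f g ![p.1, p.2] =
      if (p.2 : ℝ) ≤ 1 / 2 then f ![p.1, a p.2] else g ![p.1, b p.2] := by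
      rw [← hup (a p.2), ← hup (b p.2)]; rfl
    rw [this]
    dsimp only
    split_ifs
    · exact F2 (p.1, a p.2)
    · exact G2 (p.1, b p.2)
  · intro p; dsimp only; split_ifs
    · exact F3 _
    · exact G3 _
  · intro t; simp only [F4, G4, ite_self]
  · intro s; simp only [hn0, if_true, ha0, F5]
  · intro s; simp only [hn, if_false, hb0, G6]
  · refine Continuous.if_le (by fun_prop) (by fun_prop) (by fun_prop) (by fun_prop) ?_
    intro p hp
    rw [ha1 _ hp, hb1 _ hp, v2, add_zero]
  · simp only [hn0, if_true, ha0, u2]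
  · simp only [hn, if_false, hb0, u3, v3]; push_cast; ring
  · intro t
    dsimp only
    split_ifs
    · exact u4 _
    · rw [v4, Complex.exp_add, u3, Complex.exp_int_mul_two_pi_mul_I, one_mul]

theorem main_abstract (L : LineFam X V) (x : X) (hs : ∃ (f : Ω^ (Fin 2) X x) (e : V), Deg L f e 1)
    (hi : ∀ (f : Ω^ (Fin 2) X x) (e : V), Deg L f e 0 → GenLoop.Homotopic f GenLoop.const) :
    Nonempty ((π_ 2 X x) ≃* Multiplicative ℤ) := by
  obtain ⟨e, he, hPe⟩ := L.exists_ne x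
  choose D hD using fun f : Ω^ (Fin 2) X x => deg_exists L f e he hPe
  let Φ : π_ 2 X x → ℤ := Quotient.lift D (fun f g hfg => by
    obtain ⟨e', h'⟩ := deg_homotopic L hfg (hD f)
    exact deg_unique L _ h' (hD g))
  have hmul : ∀ a b : π_ 2 X x, Φ (a * b) = Φ a + Φ b := by
    intro a b
    induction a using Quotient.inductionOn with | _ p
    induction b using Quotient.inductionOn with | _ q
    have := HomotopyGroup.mul_spec (i := (1 : Fin 2)) (p := p) (q := q)
    beta_reduce at this
    erw [this]
    change D _ = D _ + D _
    rw [add_comm]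
    exact deg_unique L _ (hD _) (deg_trans L (hD q) (hD p))
  let Ψ : π_ 2 X x →* Multiplicative ℤ :=
    MonoidHom.mk' (fun a => Multiplicative.ofAdd (Φ a)) (fun a b => by rw [hmul]; rfl)
  have hΨ : ∀ a, Ψ a = Multiplicative.ofAdd (Φ a) := fun a => rfl
  refine ⟨MulEquiv.ofBijective Ψ ⟨?_, ?_⟩⟩
  · rw [injective_iff_map_eq_one]
    intro a ha
    induction a using Quotient.inductionOn with | _ p
    have h0 : D p = 0 := ha
    have := hi p e (h0 ▸ hD p)
    rw [HomotopyGroup.one_def]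
    exact Quotient.sound this
  · intro m
    obtain ⟨f, e', hf⟩ := hs
    let a : π_ 2 X x := Quotient.mk _ f
    refine ⟨a ^ (Multiplicative.toAdd m), ?_⟩
    rw [map_zpow, hΨ]
    have : Φ a = 1 := deg_unique L _ (hD f) hf
    rw [this, ← ofAdd_zsmul]
    simp

end PiTwo

namespace PiTwo
open scoped unitInterval Topology.Homotopy
section step
variable {X T : Type*} [TopologicalSpace X] [TopologicalSpace T]

lemma homotopicRel_mono {f g : C(T, X)} {S S' : Set T} (h : f.HomotopicRel g S) (hS : S' ⊆ S) :
    f.HomotopicRel g S' := by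
  obtain ⟨H⟩ := h
  exact ⟨⟨H.toHomotopy, fun t x hx => H.prop' t x (hS hx)⟩⟩

lemma step (A : Set X) (F : C(T, X)) (φ : T → I) (hφ : Continuous φ) (O W : Set T) (hW : IsOpen W)
    (hOW : ∀ t, t ∈ O ∨ t ∈ W) (hφW : ∀ t ∈ W, φ t = 0) (E : I → T → X)
    (hE : ∀ r, ∀ t ∈ O, ContinuousAt (fun p : I × T => E p.1 p.2) (r, t))
    (hE0 : ∀ t, E 0 t = F t) (hEA : ∀ r t, F t ∈ A → E r t = F t) :
    ∃ G : C(T, X), (∀ t, G t = E (φ t) t) ∧ F.HomotopicRel G {t | F t ∈ A} := by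
  have hc : Continuous fun p : I × T => E (p.1 * φ p.2) p.2 := by
    rw [continuous_iff_continuousAt]
    rintro ⟨r, t⟩
    rcases hOW t with h | h
    · have h1 : ContinuousAt (fun p : I × T => (p.1 * φ p.2, p.2)) (r, t) := by fun_prop
      exact ContinuousAt.comp (f := fun p : I × T => (p.1 * φ p.2, p.2)) (x := (r, t))
        (g := fun p : I × T => E p.1 p.2) (hE (r * φ t) t h) h1
    · have : (fun p : I × T => E (p.1 * φ p.2) p.2) =ᶠ[𝓝 (r, t)] fun p => F p.2 := by
        have hn : ∀ᶠ p : I × T in 𝓝 (r, t), p.2 ∈ W :=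
          continuousAt_snd.eventually (hW.mem_nhds h)
        filter_upwards [hn] with p hp
        rw [hφW _ hp, mul_zero, hE0]
      exact ContinuousAt.congr (by fun_prop) this.symm
  refine ⟨⟨fun t => E (φ t) t, ?_⟩, fun t => rfl, ⟨⟨⟨⟨fun p => E (p.1 * φ p.2) p.2, hc⟩, ?_, ?_⟩, ?_⟩⟩⟩
  · have := hc.comp (by fun_prop : Continuous fun t : T => ((1 : I), t))
    simpa [Function.comp_def] using this
  · intro t; simp [hE0]
  · intro t; simp
  · intro r t ht; simp only [ContinuousMap.coe_mk]; exact hEA _ _ ht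
end step

lemma isOpen_or {T : Type*} [TopologicalSpace T] {f g h k : T → ℝ} (hf : Continuous f)
    (hg : Continuous g) (hh : Continuous h) (hk : Continuous k) :
    IsOpen {p | f p < g p ∨ h p < k p} := by
  have := IsOpen.union (isOpen_lt hf hg) (isOpen_lt hh hk)
  convert this using 1
  ext p; simp

lemma isOpen_and {T : Type*} [TopologicalSpace T] {f g h k : T → ℝ} (hf : Continuous f)
    (hg : Continuous g) (hh : Continuous h) (hk : Continuous k) :
    IsOpen {p | f p < g p ∧ h p < k p} :=
  IsOpen.and (isOpen_lt hf hg) (isOpen_lt hh hk)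

noncomputable def dz (a : ℝ) : ℝ := min (Int.fract a) (1 - Int.fract a)

lemma continuous_dz : Continuous dz := by
  have := ContinuousOn.comp_fract'' (f := fun x : ℝ => min x (1 - x)) (by fun_prop) (by simp)
  exact this

lemma dz_eq (a : ℝ) : dz a = |a - round a| := (abs_sub_round_eq_min a).symm

lemma dz_lt {a ε : ℝ} (h : dz a < ε) : (round a : ℝ) - ε < a ∧ a < round a + ε := by
  rw [dz_eq, abs_lt] at h
  constructor <;> linarith

lemma lt_dz {a ε : ℝ} (h : ε < dz a) : (⌊a⌋ : ℝ) + ε < a ∧ a < ⌊a⌋ + 1 - ε := by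
  obtain ⟨h1, h2⟩ := lt_min_iff.1 h
  rw [Int.fract] at h1 h2
  constructor <;> linarith

lemma round_near {a : ℝ} (h : dz a < 1 / 4) : ∀ᶠ a' in 𝓝 a, round a' = round a := by
  obtain ⟨h1, h2⟩ := dz_lt h
  filter_upwards [Ioo_mem_nhds h1 h2] with x hx
  rw [round_eq x, Int.floor_eq_iff]
  constructor <;> linarith [hx.1, hx.2]

lemma floor_near {a : ℝ} (h : 0 < dz a) : ∀ᶠ a' in 𝓝 a, ⌊a'⌋ = ⌊a⌋ := by
  obtain ⟨h1, h2⟩ := lt_dz h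
  filter_upwards [Ioo_mem_nhds h1 h2] with x hx
  rw [Int.floor_eq_iff]
  constructor <;> linarith [hx.1, hx.2]

noncomputable def crush (a : ℝ) : ℝ :=
  a + ((max 0 (min 1 (2 * Int.fract a - 1 / 2))) - Int.fract a)

lemma crush_eq (a : ℝ) : crush a = ⌊a⌋ + max 0 (min 1 (2 * Int.fract a - 1 / 2)) := by
  unfold crush
  have := Int.floor_add_fract a
  linarith

lemma continuous_crush : Continuous crush := by
  have := ContinuousOn.comp_fract'' (f := fun x : ℝ => (max 0 (min 1 (2 * x - 1 / 2))) - x)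
    (by fun_prop) (by norm_num)
  exact continuous_id.add this

lemma crush_int (i : ℤ) : crush i = i := by rw [crush_eq]; simp

lemma crush_near {a : ℝ} {i : ℤ} (h1 : i - 1 / 4 ≤ a) (h2 : a ≤ i + 1 / 4) : crush a = i := by
  rw [crush_eq]
  rcases le_or_gt (i : ℝ) a with h | h
  · have : ⌊a⌋ = i := by rw [Int.floor_eq_iff]; constructor <;> linarith
    rw [Int.fract, this, max_eq_left]; · simp
    exact min_le_of_right_le (by linarith)
  · have : ⌊a⌋ = i - 1 := by rw [Int.floor_eq_iff]; push_cast; constructor <;> linarith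
    rw [Int.fract, this, min_eq_left, max_eq_right] <;> push_cast <;> linarith

lemma crush_mem {a : ℝ} {i : ℤ} (h1 : i - 1 / 16 ≤ a) (h2 : a ≤ i + 17 / 16) :
    i ≤ crush a ∧ crush a ≤ i + 1 := by
  rcases le_or_gt a i with h | h
  · rw [crush_near (i := i)] <;> [constructor; skip; skip] <;> linarith
  rcases le_or_gt (i + 1 : ℝ) a with h' | h'
  · rw [crush_near (i := i + 1)] <;> push_cast <;> [constructor; skip; skip] <;> linarith
  · have : ⌊a⌋ = i := by rw [Int.floor_eq_iff]; constructor <;> linarith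
    rw [crush_eq, this]
    have h3 : max 0 (min 1 (2 * Int.fract a - 1 / 2)) ≤ 1 := max_le zero_le_one (min_le_left _ _)
    have h4 : 0 ≤ max 0 (min 1 (2 * Int.fract a - 1 / 2)) := le_max_left _ _
    constructor <;> linarith

noncomputable def cl (x : ℝ) : I := Set.projIcc 0 1 zero_le_one x
lemma continuous_cl : Continuous cl := continuous_projIcc (h := zero_le_one)
lemma cl_one {x : ℝ} (h : 1 ≤ x) : cl x = 1 := Set.projIcc_of_right_le _ h
lemma cl_zero {x : ℝ} (h : x ≤ 0) : cl x = 0 := Set.projIcc_of_le_left _ h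

section grid
variable {X S : Type*} [TopologicalSpace X] (A : Set X) (U : S → Set X)

def HD : Prop := ∀ s₁ s₂, ∃ D : I → X → X,
  (∀ r c, c ∈ U s₁ → c ∈ U s₂ → ContinuousAt (fun p : I × X => D p.1 p.2) (r, c)) ∧
  (∀ c, D 0 c = c) ∧ (∀ r c, c ∈ U s₁ → c ∈ U s₂ → D r c ∈ U s₁ ∧ D r c ∈ U s₂) ∧
  (∀ r, ∀ a ∈ A, D r a = a) ∧ ∀ c, c ∈ U s₁ → c ∈ U s₂ → D 1 c ∈ A

def HP : Prop := ∀ s : Fin 4 → S, ∀ c, (∀ k, c ∈ U (s k)) → ∃ γ : I → X, Continuous γ ∧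
  γ 0 = c ∧ γ 1 ∈ A ∧ (∀ r k, γ r ∈ U (s k)) ∧ (c ∈ A → ∀ r, γ r = c)

def JJ (s : ℤ → ℤ → S) (F : ℝ × ℝ → X) : Prop := ∀ (i j : ℤ) (p : ℝ × ℝ), i - 1 / 16 < p.1 →
  p.1 < i + 17 / 16 → j - 1 / 16 < p.2 → p.2 < j + 17 / 16 → F p ∈ U (s i j)

variable {A U}

lemma stage_vertex (hP : HP A U) (s : ℤ → ℤ → S) (F₀ : C(ℝ × ℝ, X))
    (hF : ∀ (i j : ℤ) (p : ℝ × ℝ), i ≤ p.1 → p.1 ≤ i + 1 → j ≤ p.2 → p.2 ≤ j + 1 →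
      F₀ p ∈ U (s i j)) (F : C(ℝ × ℝ, X)) (hFF : ∀ p, F p = F₀ (crush p.1, crush p.2)) :
    ∃ G : C(ℝ × ℝ, X), JJ U s G ∧ F.HomotopicRel G {p | F p ∈ A} ∧
      ∀ p, dz p.1 ≤ 1 / 8 → dz p.2 ≤ 1 / 8 → G p ∈ A := by
  have hU4 : ∀ i j : ℤ, ∀ k : Fin 4, F₀ ((i : ℝ), (j : ℝ)) ∈
      U (![s (i - 1) (j - 1), s (i - 1) j, s i (j - 1), s i j] k) := by
    intro i j k
    fin_cases k <;> simp <;> apply hF <;> push_cast <;> linarith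
  choose γ g1 g2 g3 g4 g5 using fun i j => hP _ _ (hU4 i j)
  let O : Set (ℝ × ℝ) := {p | dz p.1 < 1 / 4 ∧ dz p.2 < 1 / 4}
  let W : Set (ℝ × ℝ) := {p | 3 / 16 < dz p.1 ∨ 3 / 16 < dz p.2}
  have hdz := continuous_dz
  have hcl := continuous_cl
  have hO : IsOpen O := isOpen_and (by fun_prop) (by fun_prop) (by fun_prop) (by fun_prop)
  have hW : IsOpen W := isOpen_or (by fun_prop) (by fun_prop) (by fun_prop) (by fun_prop)
  have hFO : ∀ p ∈ O, F p = F₀ ((round p.1 : ℝ), (round p.2 : ℝ)) := by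
    intro p hp
    obtain ⟨a1, a2⟩ := dz_lt hp.1
    obtain ⟨b1, b2⟩ := dz_lt hp.2
    rw [hFF, crush_near a1.le a2.le, crush_near b1.le b2.le]
  classical
  let E : I → ℝ × ℝ → X := fun r p => if p ∈ O then γ (round p.1) (round p.2) r else F p
  have hEO : ∀ r, ∀ p ∈ O, E r p = γ (round p.1) (round p.2) r := fun r p hp => if_pos hp
  have hEn : ∀ r, ∀ p ∉ O, E r p = F p := fun r p hp => if_neg hp
  obtain ⟨G, hG, hG2⟩ := step A F (fun p => cl (3 - 16 * dz p.1) * cl (3 - 16 * dz p.2))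
    (by fun_prop) O W hW (fun t => by
      by_cases h : t ∈ W
      · exact Or.inr h
      · simp only [W, Set.mem_ofPred_eq, not_or, not_lt] at h
        left; constructor <;> linarith)
    (fun t ht => by
      rcases ht with h | h
      · rw [cl_zero (by linarith), zero_mul]
      · rw [cl_zero (x := 3 - 16 * dz t.2) (by linarith), mul_zero]) E
    (fun r p hp => by
      have h1 : ∀ᶠ q : I × (ℝ × ℝ) in 𝓝 (r, p), round q.2.1 = round p.1 :=
        (by fun_prop : ContinuousAt (fun q : I × (ℝ × ℝ) => q.2.1) (r, p)).eventually (round_near hp.1)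
      have h2 : ∀ᶠ q : I × (ℝ × ℝ) in 𝓝 (r, p), round q.2.2 = round p.2 :=
        (by fun_prop : ContinuousAt (fun q : I × (ℝ × ℝ) => q.2.2) (r, p)).eventually (round_near hp.2)
      have h3 : ∀ᶠ q : I × (ℝ × ℝ) in 𝓝 (r, p), q.2 ∈ O :=
        continuousAt_snd.eventually (hO.mem_nhds hp)
      have : Continuous fun q : I × (ℝ × ℝ) => γ (round p.1) (round p.2) q.1 :=
        (g1 _ _).comp continuous_fst
      refine this.continuousAt.congr ?_
      filter_upwards [h1, h2, h3] with q e1 e2 e3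
      rw [hEO _ _ e3, e1, e2])
    (fun t => by
      by_cases h : t ∈ O
      · rw [hEO _ _ h, g2, hFO t h]
      · rw [hEn _ _ h])
    (fun r t hA => by
      by_cases h : t ∈ O
      · rw [hEO _ _ h, g5 _ _ (by rw [← hFO t h]; exact hA), hFO t h]
      · rw [hEn _ _ h])
  refine ⟨G, ?_, hG2, ?_⟩
  · intro i j p h1 h2 h3 h4
    rw [hG]
    by_cases h : p ∈ O
    · rw [hEO _ _ h]
      obtain ⟨a1, a2⟩ := dz_lt h.1
      obtain ⟨b1, b2⟩ := dz_lt h.2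
      have c1 : i = round p.1 - 1 ∨ i = round p.1 := by
        have : (i : ℝ) < round p.1 + 1 := by linarith
        have : (round p.1 : ℝ) < i + 2 := by linarith
        norm_cast at *; omega
      have c2 : j = round p.2 - 1 ∨ j = round p.2 := by
        have : (j : ℝ) < round p.2 + 1 := by linarith
        have : (round p.2 : ℝ) < j + 2 := by linarith
        norm_cast at *; omega
      have := g4 (round p.1) (round p.2)
      rcases c1 with c1 | c1 <;> rcases c2 with c2 | c2 <;> rw [c1, c2]
      · exact this _ 0
      · exact this _ 1
      · exact this _ 2
      · exact this _ 3
    · rw [hEn _ _ h, hFF]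
      obtain ⟨a1, a2⟩ := crush_mem h1.le h2.le
      obtain ⟨b1, b2⟩ := crush_mem h3.le h4.le
      exact hF _ _ _ a1 a2 b1 b2
  · intro p h1 h2
    have h : p ∈ O := by constructor <;> linarith
    rw [hG, cl_one (by linarith), cl_one (by linarith), one_mul, hEO _ _ h]
    exact g3 _ _

lemma stage_edge (hD : HD A U) (s : ℤ → ℤ → S) (F : C(ℝ × ℝ, X)) (hJ : JJ U s F) :
    ∃ G : C(ℝ × ℝ, X), JJ U s G ∧ F.HomotopicRel G {p | F p ∈ A} ∧
      ∀ p, dz p.1 ≤ 1 / 32 → 1 / 8 ≤ dz p.2 → G p ∈ A := by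
  choose D d1 d2 d3 d4 d5 using hD
  let O : Set (ℝ × ℝ) := {p | dz p.1 < 1 / 16 ∧ 3 / 32 < dz p.2}
  let W : Set (ℝ × ℝ) := {p | 3 / 64 < dz p.1 ∨ dz p.2 < 7 / 64}
  have hdz := continuous_dz
  have hcl := continuous_cl
  have hW : IsOpen W := isOpen_or (by fun_prop) (by fun_prop) (by fun_prop) (by fun_prop)
  let E : I → ℝ × ℝ → X := fun r p =>
    D (s (round p.1 - 1) ⌊p.2⌋) (s (round p.1) ⌊p.2⌋) r (F p)
  have hFO : ∀ p ∈ O, F p ∈ U (s (round p.1 - 1) ⌊p.2⌋) ∧ F p ∈ U (s (round p.1) ⌊p.2⌋) := by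
    intro p hp
    obtain ⟨a1, a2⟩ := dz_lt hp.1
    obtain ⟨b1, b2⟩ := lt_dz hp.2
    constructor <;> apply hJ <;> push_cast <;> linarith
  obtain ⟨G, hG, hG2⟩ := step A F (fun p => cl (3 - 64 * dz p.1) * cl (64 * dz p.2 - 7))
    (by fun_prop) O W hW (fun t => by
      by_cases h : t ∈ W
      · exact Or.inr h
      · simp only [W, Set.mem_ofPred_eq, not_or, not_lt] at h
        left; constructor <;> linarith)
    (fun t ht => by
      rcases ht with h | h
      · rw [cl_zero (by linarith), zero_mul]
      · rw [cl_zero (x := 64 * dz t.2 - 7) (by linarith), mul_zero]) E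
    (fun r p hp => by
      have h1 : ∀ᶠ q : I × (ℝ × ℝ) in 𝓝 (r, p), round q.2.1 = round p.1 :=
        (by fun_prop : ContinuousAt (fun q : I × (ℝ × ℝ) => q.2.1) (r, p)).eventually
          (round_near (by linarith [hp.1]))
      have h2 : ∀ᶠ q : I × (ℝ × ℝ) in 𝓝 (r, p), ⌊q.2.2⌋ = ⌊p.2⌋ :=
        (by fun_prop : ContinuousAt (fun q : I × (ℝ × ℝ) => q.2.2) (r, p)).eventually
          (floor_near (by linarith [hp.2]))
      have : ContinuousAt (fun q : I × (ℝ × ℝ) =>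
          D (s (round p.1 - 1) ⌊p.2⌋) (s (round p.1) ⌊p.2⌋) q.1 (F q.2)) (r, p) :=
        ContinuousAt.comp (f := fun q : I × (ℝ × ℝ) => (q.1, F q.2))
          (d1 _ _ _ _ (hFO p hp).1 (hFO p hp).2) (by fun_prop)
      refine this.congr ?_
      filter_upwards [h1, h2] with q e1 e2
      simp only [E, e1, e2])
    (fun t => d2 _ _ _)
    (fun r t hA => d4 _ _ _ _ hA)
  refine ⟨G, ?_, hG2, ?_⟩
  · intro i j p h1 h2 h3 h4
    rw [hG]
    by_cases h : p ∈ O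
    · obtain ⟨a1, a2⟩ := dz_lt h.1
      obtain ⟨b1, b2⟩ := lt_dz h.2
      have c1 : i = round p.1 - 1 ∨ i = round p.1 := by
        have : (i : ℝ) < round p.1 + 1 := by linarith
        have : (round p.1 : ℝ) < i + 2 := by linarith
        norm_cast at *; omega
      have c2 : j = ⌊p.2⌋ := by
        have : (j : ℝ) < ⌊p.2⌋ + 1 := by linarith
        have : (⌊p.2⌋ : ℝ) < j + 1 := by linarith
        norm_cast at *; omega
      have := d3 (s (round p.1 - 1) ⌊p.2⌋) (s (round p.1) ⌊p.2⌋)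
        (cl (3 - 64 * dz p.1) * cl (64 * dz p.2 - 7)) _ (hFO p h).1 (hFO p h).2
      rcases c1 with c1 | c1 <;> rw [c1, c2]
      · exact this.1
      · exact this.2
    · have hw : cl (3 - 64 * dz p.1) * cl (64 * dz p.2 - 7) = 0 := by
        by_cases h' : dz p.1 < 1 / 16
        · have h'' : dz p.2 ≤ 3 / 32 := by
            by_contra hh; exact h ⟨h', by linarith⟩
          rw [cl_zero (x := 64 * dz p.2 - 7) (by linarith), mul_zero]
        · rw [cl_zero (by linarith), zero_mul]
      rw [hw]
      have : E 0 p = F p := d2 _ _ _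
      rw [this]
      exact hJ _ _ _ h1 h2 h3 h4
  · intro p h1 h2
    have h : p ∈ O := by constructor <;> linarith
    rw [hG, cl_one (by linarith), cl_one (by linarith), one_mul]
    exact d5 _ _ _ (hFO p h).1 (hFO p h).2

lemma stage_square (hD : HD A U) (s : ℤ → ℤ → S) (F : C(ℝ × ℝ, X)) (hJ : JJ U s F) :
    ∃ G : C(ℝ × ℝ, X), F.HomotopicRel G {p | F p ∈ A} ∧
      ∀ p, 1 / 32 ≤ dz p.1 → 1 / 32 ≤ dz p.2 → G p ∈ A := by
  choose D d1 d2 d3 d4 d5 using hD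
  let O : Set (ℝ × ℝ) := {p | 1 / 64 < dz p.1 ∧ 1 / 64 < dz p.2}
  let W : Set (ℝ × ℝ) := {p | dz p.1 < 3 / 128 ∨ dz p.2 < 3 / 128}
  have hdz := continuous_dz
  have hcl := continuous_cl
  have hW : IsOpen W := isOpen_or (by fun_prop) (by fun_prop) (by fun_prop) (by fun_prop)
  let E : I → ℝ × ℝ → X := fun r p => D (s ⌊p.1⌋ ⌊p.2⌋) (s ⌊p.1⌋ ⌊p.2⌋) r (F p)
  have hFO : ∀ p ∈ O, F p ∈ U (s ⌊p.1⌋ ⌊p.2⌋) := by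
    intro p hp
    obtain ⟨a1, a2⟩ := lt_dz hp.1
    obtain ⟨b1, b2⟩ := lt_dz hp.2
    apply hJ <;> linarith
  obtain ⟨G, hG, hG2⟩ := step A F (fun p => cl (128 * dz p.1 - 3) * cl (128 * dz p.2 - 3))
    (by fun_prop) O W hW (fun t => by
      by_cases h : t ∈ W
      · exact Or.inr h
      · simp only [W, Set.mem_ofPred_eq, not_or, not_lt] at h
        left; constructor <;> linarith)
    (fun t ht => by
      rcases ht with h | h
      · rw [cl_zero (by linarith), zero_mul]
      · rw [cl_zero (x := 128 * dz t.2 - 3) (by linarith), mul_zero]) E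
    (fun r p hp => by
      have h1 : ∀ᶠ q : I × (ℝ × ℝ) in 𝓝 (r, p), ⌊q.2.1⌋ = ⌊p.1⌋ :=
        (by fun_prop : ContinuousAt (fun q : I × (ℝ × ℝ) => q.2.1) (r, p)).eventually
          (floor_near (by linarith [hp.1]))
      have h2 : ∀ᶠ q : I × (ℝ × ℝ) in 𝓝 (r, p), ⌊q.2.2⌋ = ⌊p.2⌋ :=
        (by fun_prop : ContinuousAt (fun q : I × (ℝ × ℝ) => q.2.2) (r, p)).eventually
          (floor_near (by linarith [hp.2]))
      have : ContinuousAt (fun q : I × (ℝ × ℝ) =>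
          D (s ⌊p.1⌋ ⌊p.2⌋) (s ⌊p.1⌋ ⌊p.2⌋) q.1 (F q.2)) (r, p) :=
        ContinuousAt.comp (f := fun q : I × (ℝ × ℝ) => (q.1, F q.2))
          (d1 _ _ _ _ (hFO p hp) (hFO p hp)) (by fun_prop)
      refine this.congr ?_
      filter_upwards [h1, h2] with q e1 e2
      simp only [E, e1, e2])
    (fun t => d2 _ _ _)
    (fun r t hA => d4 _ _ _ _ hA)
  refine ⟨G, hG2, ?_⟩
  intro p h1 h2
  have h : p ∈ O := by constructor <;> linarith
  rw [hG, cl_one (by linarith), cl_one (by linarith), one_mul]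
  exact d5 _ _ _ (hFO p h) (hFO p h)

end grid

end PiTwo

namespace PiTwo
open scoped unitInterval Topology.Homotopy
lemma homotopicRel_pre {X T T' : Type*} [TopologicalSpace X] [TopologicalSpace T]
    [TopologicalSpace T'] {f g : C(T, X)} {S : Set T} (h : f.HomotopicRel g S) (e : C(T', T))
    (S' : Set T') (hS : ∀ t ∈ S', e t ∈ S) : (f.comp e).HomotopicRel (g.comp e) S' := by
  obtain ⟨H⟩ := h
  refine ⟨⟨⟨⟨fun p => H (p.1, e p.2), by fun_prop⟩, ?_, ?_⟩, ?_⟩⟩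
  · intro t; simp
  · intro t; simp
  · intro r t ht; exact H.prop' r _ (hS t ht)

section grid
variable {X S : Type*} [TopologicalSpace X] {A : Set X} {U : S → Set X}

lemma grid_plane (hP : HP A U) (hD : HD A U) (s : ℤ → ℤ → S) (F₀ : C(ℝ × ℝ, X))
    (hF : ∀ (i j : ℤ) (p : ℝ × ℝ), i ≤ p.1 → p.1 ≤ i + 1 → j ≤ p.2 → p.2 ≤ j + 1 →
      F₀ p ∈ U (s i j)) (F : C(ℝ × ℝ, X)) (hFF : ∀ p, F p = F₀ (crush p.1, crush p.2)) :
    ∃ G : C(ℝ × ℝ, X), F.HomotopicRel G {p | F p ∈ A} ∧ ∀ p, G p ∈ A := by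
  obtain ⟨G1, J1, h1, a1⟩ := stage_vertex hP s F₀ hF F hFF
  obtain ⟨G2, J2, h2, a2⟩ := stage_edge hD s G1 J1
  let sw : C(ℝ × ℝ, ℝ × ℝ) := ⟨Prod.swap, continuous_swap⟩
  obtain ⟨G3', J3', h3', a3'⟩ := stage_edge hD (fun i j => s j i) (G2.comp sw)
    (fun i j p e1 e2 e3 e4 => J2 j i p.swap e3 e4 e1 e2)
  let G3 := G3'.comp sw
  have J3 : JJ U s G3 := fun i j p e1 e2 e3 e4 => J3' j i p.swap e3 e4 e1 e2
  have h3 : G2.HomotopicRel G3 {p | G2 p ∈ A} := by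
    have := homotopicRel_pre h3' sw {p | G2 p ∈ A} (fun p hp => by simpa [sw] using hp)
    have e : (G2.comp sw).comp sw = G2 := by ext p; simp [sw]
    rwa [e] at this
  have a3 : ∀ p, dz p.2 ≤ 1 / 32 → 1 / 8 ≤ dz p.1 → G3 p ∈ A := fun p e1 e2 => a3' p.swap e1 e2
  obtain ⟨G4, h4, a4⟩ := stage_square hD s G3 J3
  have m1 : ∀ p, F p ∈ A → G1 p ∈ A := fun p hp => by rwa [← h1.fst_eq_snd hp]
  have m2 : ∀ p, G1 p ∈ A → G2 p ∈ A := fun p hp => by rwa [← h2.fst_eq_snd hp]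
  have m3 : ∀ p, G2 p ∈ A → G3 p ∈ A := fun p hp => by rwa [← h3.fst_eq_snd hp]
  have m4 : ∀ p, G3 p ∈ A → G4 p ∈ A := fun p hp => by rwa [← h4.fst_eq_snd hp]
  refine ⟨G4, ?_, ?_⟩
  · refine h1.trans ((homotopicRel_mono h2 fun p hp => m1 p hp).trans
      ((homotopicRel_mono h3 fun p hp => m2 p (m1 p hp)).trans
      (homotopicRel_mono h4 fun p hp => m3 p (m2 p (m1 p hp)))))
  · intro p
    by_cases c1 : 1 / 32 ≤ dz p.1
    · by_cases c2 : 1 / 32 ≤ dz p.2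
      · exact a4 p c1 c2
      · by_cases c3 : dz p.1 ≤ 1 / 8
        · exact m4 _ (m3 _ (m2 _ (a1 p c3 (by linarith))))
        · exact m4 _ (a3 p (by linarith) (by linarith))
    · by_cases c3 : dz p.2 ≤ 1 / 8
      · exact m4 _ (m3 _ (m2 _ (a1 p (by linarith) c3)))
      · exact m4 _ (m3 _ (a2 p (by linarith) (by linarith)))

theorem grid_lemma (hP : HP A U) (hD : HD A U) (hUo : ∀ s, IsOpen (U s)) (hUc : ∀ c, ∃ s, c ∈ U s)
    {x₀ : X} (hx₀ : x₀ ∈ A) (f : Ω^ (Fin 2) X x₀) :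
    ∃ g : Ω^ (Fin 2) X x₀, GenLoop.Homotopic f g ∧ ∀ t, g t ∈ A := by
  obtain ⟨δ, hδ, hL⟩ := lebesgue_number_lemma_of_metric (s := (Set.univ : Set Sq)) isCompact_univ
    (c := fun s => f ⁻¹' U s) (fun s => (hUo s).preimage f.1.continuous) (fun t _ => by
      obtain ⟨s, hs⟩ := hUc (f t)
      exact Set.mem_iUnion.2 ⟨s, hs⟩)
  obtain ⟨N, hN⟩ := exists_nat_one_div_lt hδ
  set M : ℝ := (N : ℝ) + 1 with hM
  have hM0 : 0 < M := by positivity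
  let q : ℝ × ℝ → Sq := fun p => ![cl (p.1 / M), cl (p.2 / M)]
  have hcl := continuous_cl
  have hq : Continuous q := cont_vec.comp
    (by fun_prop : Continuous fun p : ℝ × ℝ => (cl (p.1 / M), cl (p.2 / M)))
  choose s hs using fun i j : ℤ => hL (q ((i : ℝ), (j : ℝ))) (Set.mem_univ _)
  let F₀ : C(ℝ × ℝ, X) := ⟨fun p => f (q p), f.1.continuous.comp hq⟩
  have hdist : ∀ a (i : ℤ), (i : ℝ) ≤ a → a ≤ i + 1 → dist (cl (a / M)) (cl (i / M)) < δ := by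
    intro a i e1 e2
    rw [Subtype.dist_eq, Real.dist_eq]
    refine lt_of_le_of_lt (Set.abs_projIcc_sub_projIcc _) (lt_of_le_of_lt ?_ hN)
    rw [← sub_div, abs_of_nonneg (by apply div_nonneg <;> linarith)]
    gcongr
    linarith
  have hF : ∀ (i j : ℤ) (p : ℝ × ℝ), i ≤ p.1 → p.1 ≤ i + 1 → j ≤ p.2 → p.2 ≤ j + 1 →
      F₀ p ∈ U (s i j) := by
    intro i j p e1 e2 e3 e4
    apply hs i j
    rw [Metric.mem_ball, dist_pi_lt_iff hδ]
    intro k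
    fin_cases k
    · exact hdist _ _ e1 e2
    · exact hdist _ _ e3 e4
  have hcr := continuous_crush
  let F : C(ℝ × ℝ, X) := ⟨fun p => F₀ (crush p.1, crush p.2), by fun_prop⟩
  obtain ⟨G, hG, hGA⟩ := grid_plane hP hD s F₀ hF F (fun p => rfl)
  let e : C(Sq, ℝ × ℝ) := ⟨fun t => (M * t 0, M * t 1), by fun_prop⟩
  have hcrM : crush M = M := by
    have := crush_int (N + 1); push_cast at this; exact this
  have hcr0 : crush 0 = 0 := by
    have := crush_int 0; push_cast at this; exact this
  have hb : ∀ (r : ℝ) (t : Sq), t ∈ Cube.boundary (Fin 2) →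
      F₀ ((1 - r) * (M * t 0) + r * crush (M * t 0), (1 - r) * (M * t 1) + r * crush (M * t 1))
        = x₀ := by
    intro r t ht
    have key : ∀ i, (t i = 0 ∨ t i = 1) →
        cl (((1 - r) * (M * t i) + r * crush (M * t i)) / M) = 0 ∨
        cl (((1 - r) * (M * t i) + r * crush (M * t i)) / M) = 1 := by
      rintro i (h | h)
      · left; rw [h]; simp only [Set.Icc.coe_zero, mul_zero, hcr0, add_zero, zero_div]
        exact cl_zero le_rfl
      · right; rw [h]; simp only [Set.Icc.coe_one, mul_one, hcrM]
        apply cl_one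
        rw [← add_mul]; simp [hM0.ne']
    obtain ⟨i, hi⟩ := ht
    apply f.2
    refine ⟨i, ?_⟩
    have := key i hi
    fin_cases i
    · exact this
    · exact this
  have e0 : f.1.HomotopicRel (F.comp e) (Cube.boundary (Fin 2)) := by
    refine ⟨⟨⟨⟨fun p => F₀ ((1 - (p.1 : ℝ)) * (M * p.2 0) + p.1 * crush (M * p.2 0),
      (1 - (p.1 : ℝ)) * (M * p.2 1) + p.1 * crush (M * p.2 1)), by fun_prop⟩, ?_, ?_⟩, ?_⟩⟩
    · intro t
      have : q (M * t 0, M * t 1) = t := by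
        funext k
        fin_cases k <;> simp [q, cl, mul_div_cancel_left₀ _ hM0.ne']
      simp only [Set.Icc.coe_zero, sub_zero, one_mul, zero_mul, add_zero]
      change f (q _) = f t
      rw [this]
    · intro t
      simp [F, e]
    · intro r t ht
      have h2 : f.1 t = x₀ := f.2 t ht
      rw [h2]
      exact hb _ _ ht
  have e1 : (F.comp e).HomotopicRel (G.comp e) (Cube.boundary (Fin 2)) := by
    refine homotopicRel_pre hG e _ fun t ht => ?_
    have := hb 1 t ht
    simp only [sub_self, zero_mul, one_mul, zero_add] at this
    change F₀ (crush (M * t 0), crush (M * t 1)) ∈ A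
    rw [this]; exact hx₀
  have e2 := e0.trans e1
  refine ⟨⟨G.comp e, fun t ht => ?_⟩, e2, fun t => hGA _⟩
  rw [← e2.fst_eq_snd ht]; exact f.2 t ht
end grid

end PiTwo

namespace PiTwo
open scoped unitInterval Topology.Homotopy
lemma open_mk_of_graphs {X ι : Type*} [TopologicalSpace X] (r : Setoid X) (φ : ι → X → X)
    (hφ : ∀ i, Continuous (φ i)) (h : ∀ x y, r x y ↔ ∃ i, φ i x = y) :
    IsOpenQuotientMap (Quotient.mk r) := by
  refine ⟨Quotient.mk_surjective, continuous_quot_mk, fun O hO => ?_⟩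
  have : IsOpen (Quotient.mk r ⁻¹' (Quotient.mk r '' O)) := by
    have e : Quotient.mk r ⁻¹' (Quotient.mk r '' O) = ⋃ i, φ i ⁻¹' O := by
      ext x
      simp only [Set.mem_preimage, Set.mem_image, Set.mem_iUnion]
      constructor
      · rintro ⟨y, hy, hxy⟩
        obtain ⟨i, hi⟩ := (h x y).1 (r.symm (Quotient.exact hxy))
        exact ⟨i, by rwa [hi]⟩
      · rintro ⟨i, hi⟩
        exact ⟨_, hi, Quotient.sound (r.symm ((h x _).2 ⟨i, rfl⟩))⟩
    rw [e]
    exact isOpen_iUnion fun i => hO.preimage (hφ i)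
  exact this

abbrev W (n : ℕ) := {v : Fin (n + 1) → ℂ // v ≠ 0}

noncomputable def mkCP (n : ℕ) : W n → CP n := Quotient.mk (projectivizationSetoid ℂ (Fin (n + 1) → ℂ))

lemma mkCP_eq {n : ℕ} (v w : W n) : mkCP n v = mkCP n w ↔ ∃ c : ℂˣ, v.1 = c • w.1 := by
  refine (Quotient.eq (r := projectivizationSetoid ℂ (Fin (n + 1) → ℂ))).trans ?_
  constructor
  · rintro ⟨c, hc⟩; exact ⟨c, hc.symm⟩
  · rintro ⟨c, hc⟩; exact ⟨c, hc.symm⟩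

lemma mkCP_open (n : ℕ) : IsOpenQuotientMap (mkCP n) := by
  refine open_mk_of_graphs _ (fun (c : ℂˣ) (v : W n) => (⟨c • v.1, by
    have := v.2; simpa [Units.smul_def] using this⟩ : W n)) ?_ ?_
  · intro c
    fun_prop
  · intro v w
    constructor
    · rintro ⟨c, hc⟩
      refine ⟨c⁻¹, Subtype.ext ?_⟩
      simp only
      rw [← show c • w.1 = v.1 from hc]
      simp
    · rintro ⟨c, rfl⟩
      refine ⟨c⁻¹, ?_⟩
      simp

noncomputable def mkSP (n d : ℕ) : (Fin d → CP n) → SP (CP n) d := Quotient.mk (SPSetoid (CP n) d)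

lemma mkSP_open (n d : ℕ) : IsOpenQuotientMap (mkSP n d) := by
  refine open_mk_of_graphs (SPSetoid (CP n) d) (fun (τ : Equiv.Perm (Fin d)) f => f ∘ τ) ?_ ?_
  · intro τ
    fun_prop
  · intro f g; rfl

abbrev T (n d : ℕ) := Fin d → W n

noncomputable def Pr (n d : ℕ) : T n d → SP (CP n) d := mkSP n d ∘ Pi.map (fun _ => mkCP n)

lemma Pr_open (n d : ℕ) : IsOpenQuotientMap (Pr n d) :=
  (mkSP_open n d).comp (IsOpenQuotientMap.piMap fun _ => mkCP_open n)

lemma Pr_eq {n d : ℕ} (v w : T n d) : Pr n d v = Pr n d w ↔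
    ∃ (τ : Equiv.Perm (Fin d)) (c : Fin d → ℂˣ), ∀ i, (v (τ i)).1 = c i • (w i).1 := by
  refine (Quotient.eq (r := SPSetoid (CP n) d)).trans ?_
  constructor
  · rintro ⟨τ, h⟩
    have h' : ∀ i, ∃ c : ℂˣ, (v (τ i)).1 = c • (w i).1 := fun i =>
      (mkCP_eq _ _).1 (congrFun h i)
    choose c hc using h'
    exact ⟨τ, c, hc⟩
  · rintro ⟨τ, c, h⟩
    refine ⟨τ, funext fun i => (mkCP_eq _ _).2 ⟨c i, h i⟩⟩

/-- evaluation of the polynomial with coefficient vector v -/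
noncomputable def ev {n : ℕ} (v : Fin (n + 1) → ℂ) (s : ℂ) : ℂ := ∑ i, v i * s ^ (i : ℕ)

lemma ev_smul {n : ℕ} (c : ℂ) (v : Fin (n + 1) → ℂ) (s : ℂ) : ev (c • v) s = c * ev v s := by
  simp [ev, Finset.mul_sum, mul_assoc]

lemma ev_add {n : ℕ} (v w : Fin (n + 1) → ℂ) (s : ℂ) : ev (v + w) s = ev v s + ev w s := by
  simp [ev, Finset.sum_add_distrib, add_mul]

@[fun_prop]
lemma ev_cont {n : ℕ} (s : ℂ) : Continuous (fun v : Fin (n + 1) → ℂ => ev v s) := by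
  unfold ev
  fun_prop

noncomputable def poly {n : ℕ} (v : Fin (n + 1) → ℂ) : Polynomial ℂ :=
  ∑ i, Polynomial.C (v i) * Polynomial.X ^ (i : ℕ)

lemma poly_eval {n : ℕ} (v : Fin (n + 1) → ℂ) (s : ℂ) : (poly v).eval s = ev v s := by
  simp [poly, ev, Polynomial.eval_finsetSum]

lemma poly_coeff {n : ℕ} (v : Fin (n + 1) → ℂ) (i : Fin (n + 1)) :
    (poly v).coeff i = v i := by
  simp only [poly, Polynomial.finsetSum_coeff, Polynomial.coeff_C_mul_X_pow]
  simp [Fin.val_inj]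

lemma poly_ne {n : ℕ} (v : Fin (n + 1) → ℂ) (h : v ≠ 0) : poly v ≠ 0 := by
  intro h0
  apply h
  funext i
  rw [← poly_coeff v i, h0]; simp

lemma poly_deg {n : ℕ} (v : Fin (n + 1) → ℂ) : (poly v).natDegree ≤ n := by
  unfold poly
  apply Polynomial.natDegree_sum_le_of_forall_le
  intro i _
  refine (Polynomial.natDegree_C_mul_X_pow_le _ _).trans (by have := i.2; omega)

lemma ev_finite {n : ℕ} (v : W n) : {s | ev v.1 s = 0}.Finite := by
  have := Polynomial.finite_setOfPred_isRoot (poly_ne v.1 v.2)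
  simpa [Polynomial.IsRoot, poly_eval] using this

end PiTwo

namespace PiTwo
open scoped unitInterval Topology.Homotopy
noncomputable def lin (n : ℕ) (a b : ℂ) : Fin (n + 1) → ℂ :=
  fun k => if k.1 = 0 then a else if k.1 = 1 then b else 0

lemma ev_lin {n : ℕ} (hn : 1 ≤ n) (a b s : ℂ) : ev (lin n a b) s = a + b * s := by
  obtain ⟨m, rfl⟩ : ∃ m, n = m + 1 := ⟨n - 1, by omega⟩
  unfold ev lin
  rw [Fin.sum_univ_succ, Fin.sum_univ_succ]
  simp

lemma eq_lin {n : ℕ} (hn : 1 ≤ n) (v : Fin (n + 1) → ℂ)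
    (hv : ∀ k : Fin (n + 1), 2 ≤ k.1 → v k = 0) : v = lin n (v 0) (v ⟨1, by omega⟩) := by
  funext k
  unfold lin
  split_ifs with h1 h2
  · congr 1; ext; simpa using h1
  · congr 1; ext; simpa using h2
  · exact hv k (by omega)

def UU (n d : ℕ) (s : ℂ) : Set (SP (CP n) d) :=
  {c | ∃ v, Pr n d v = c ∧ ∀ i, ev (v i).1 s ≠ 0}

def AA (n d : ℕ) : Set (SP (CP n) d) :=
  {c | ∃ v, Pr n d v = c ∧ ∀ i (k : Fin (n + 1)), 2 ≤ k.1 → (v i).1 k = 0}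

lemma mem_UU {n d : ℕ} {s : ℂ} {v : T n d} : Pr n d v ∈ UU n d s ↔ ∀ i, ev (v i).1 s ≠ 0 := by
  constructor
  · rintro ⟨w, hw, h⟩ i
    obtain ⟨τ, c, hc⟩ := (Pr_eq _ _).1 hw
    have := h (τ i)
    rw [hc i, Units.smul_def, ev_smul] at this
    exact right_ne_zero_of_mul this
  · intro h; exact ⟨v, rfl, h⟩

lemma mem_AA {n d : ℕ} {v : T n d} :
    Pr n d v ∈ AA n d ↔ ∀ i (k : Fin (n + 1)), 2 ≤ k.1 → (v i).1 k = 0 := by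
  constructor
  · rintro ⟨w, hw, h⟩ i k hk
    obtain ⟨τ, c, hc⟩ := (Pr_eq _ _).1 hw
    have := h (τ i) k hk
    rw [hc i, Units.smul_def] at this
    simpa using this
  · intro h; exact ⟨v, rfl, h⟩

lemma UU_open (n d : ℕ) (s : ℂ) : IsOpen (UU n d s) := by
  rw [← (Pr_open n d).isQuotientMap.isOpen_preimage]
  have : Pr n d ⁻¹' UU n d s = ⋂ i, {v | ev (v i).1 s ≠ 0} := by
    ext v
    simp only [Set.mem_preimage, mem_UU, Set.mem_iInter]
    rfl
  rw [this]
  refine isOpen_iInter_of_finite fun i => ?_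
  exact isOpen_ne.preimage (by fun_prop)

lemma good_exists {n d : ℕ} (v : T n d) : ∃ s, ∀ i, ev (v i).1 s ≠ 0 := by
  have hf : (⋃ i, {s | ev (v i).1 s = 0}).Finite := Set.finite_iUnion fun i => ev_finite (v i)
  obtain ⟨s, hs⟩ := hf.infinite_compl.nonempty
  refine ⟨s, fun i h => hs ?_⟩
  exact Set.mem_iUnion.2 ⟨i, h⟩

lemma UU_cover (n d : ℕ) (c : SP (CP n) d) : ∃ s, c ∈ UU n d s := by
  obtain ⟨v, rfl⟩ := (Pr_open n d).surjective c
  obtain ⟨s, hs⟩ := good_exists v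
  exact ⟨s, mem_UU.2 hs⟩

/-- linear interpolation at two points -/
noncomputable def interp {n : ℕ} (s t : ℂ) (v : Fin (n + 1) → ℂ) : Fin (n + 1) → ℂ :=
  lin n (ev v s - (ev v t - ev v s) / (t - s) * s) ((ev v t - ev v s) / (t - s))

lemma interp_smul {n : ℕ} (s t c : ℂ) (v : Fin (n + 1) → ℂ) :
    interp s t (c • v) = c • interp s t v := by
  funext k
  simp only [interp, lin, ev_smul, Pi.smul_apply, smul_eq_mul]
  split_ifs <;> ring

@[fun_prop]
lemma interp_cont {n : ℕ} (s t : ℂ) : Continuous (interp (n := n) s t) := by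
  refine continuous_pi fun k => ?_
  simp only [interp, lin]
  split_ifs <;> fun_prop

lemma interp_ev {n : ℕ} (hn : 1 ≤ n) {s t : ℂ} (hst : s ≠ t) (v : Fin (n + 1) → ℂ) :
    ev (interp s t v) s = ev v s ∧ ev (interp s t v) t = ev v t := by
  have : t - s ≠ 0 := sub_ne_zero.2 hst.symm
  constructor
  · rw [interp, ev_lin hn]; ring
  · rw [interp, ev_lin hn]; field_simp; ring

lemma interp_lin {n : ℕ} (hn : 1 ≤ n) {s t : ℂ} (hst : s ≠ t) (a b : ℂ) :
    interp s t (lin n a b) = lin n a b := by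
  have : t - s ≠ 0 := sub_ne_zero.2 hst.symm
  rw [interp, ev_lin hn, ev_lin hn]
  have e : (a + b * t - (a + b * s)) / (t - s) = b := by field_simp; ring
  rw [e]
  congr 1
  ring

/-- the linear deformation -/
noncomputable def defm {n : ℕ} (s t : ℂ) (r : ℝ) (v : Fin (n + 1) → ℂ) : Fin (n + 1) → ℂ :=
  (1 - r : ℂ) • v + (r : ℂ) • interp s t v

lemma defm_smul {n : ℕ} (s t c : ℂ) (r : ℝ) (v : Fin (n + 1) → ℂ) :
    defm s t r (c • v) = c • defm s t r v := by
  unfold defm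
  rw [interp_smul, smul_add, smul_comm c, smul_comm c]

lemma defm_ev {n : ℕ} (hn : 1 ≤ n) {s t : ℂ} (hst : s ≠ t) (r : ℝ) (v : Fin (n + 1) → ℂ) :
    ev (defm s t r v) s = ev v s ∧ ev (defm s t r v) t = ev v t := by
  obtain ⟨h1, h2⟩ := interp_ev hn hst v
  unfold defm
  rw [ev_add, ev_add, ev_smul, ev_smul, ev_smul, ev_smul, h1, h2]
  constructor <;> ring

open Classical in
noncomputable def defT {n d : ℕ} (s t : ℂ) (r : ℝ) (v : T n d) : T n d :=
  fun i => if h : defm s t r (v i).1 ≠ 0 then ⟨_, h⟩ else v i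

lemma defT_val {n d : ℕ} (s t : ℂ) (r : ℝ) (v : T n d) (i : Fin d)
    (h : defm s t r (v i).1 ≠ 0) : (defT s t r v i).1 = defm s t r (v i).1 := by
  unfold defT
  rw [dif_pos h]

lemma defT_inv {n d : ℕ} (s t : ℂ) (r : ℝ) (v w : T n d) (h : Pr n d v = Pr n d w) :
    Pr n d (defT s t r v) = Pr n d (defT s t r w) := by
  obtain ⟨τ, c, hc⟩ := (Pr_eq _ _).1 h
  refine (Pr_eq _ _).2 ⟨τ, c, fun i => ?_⟩
  have h1 : defm s t r (v (τ i)).1 = c i • defm s t r (w i).1 := by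
    rw [hc i, Units.smul_def, defm_smul, Units.smul_def]
  by_cases h : defm s t r (w i).1 = 0
  · have h2 : defm s t r (v (τ i)).1 = 0 := by rw [h1, h, smul_zero]
    unfold defT
    rw [dif_neg (by simpa using h2), dif_neg (by simpa using h)]
    exact hc i
  · have h2 : defm s t r (v (τ i)).1 ≠ 0 := by
      rw [h1]; simpa [Units.smul_def] using h
    rw [defT_val _ _ _ _ _ h2, defT_val _ _ _ _ _ h, h1]

noncomputable def defX {n d : ℕ} (s t : ℂ) (r : ℝ) (c : SP (CP n) d) : SP (CP n) d :=
  Pr n d (defT s t r (Function.surjInv (Pr_open n d).surjective c))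

lemma defX_mk {n d : ℕ} (s t : ℂ) (r : ℝ) (v : T n d) :
    defX s t r (Pr n d v) = Pr n d (defT s t r v) :=
  defT_inv _ _ _ _ _ (Function.surjInv_eq _ _)

lemma ne_zero_of_ev {n : ℕ} {v : Fin (n + 1) → ℂ} {s : ℂ} (h : ev v s ≠ 0) : v ≠ 0 := by
  rintro rfl
  apply h
  simp [ev]

lemma defX_props {n d : ℕ} (hn : 1 ≤ n) {s t : ℂ} (hst : s ≠ t) :
    (∀ (r : ℝ) c, c ∈ UU n d s → ContinuousAt (fun p : ℝ × SP (CP n) d => defX s t p.1 p.2) (r, c))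
    ∧ (∀ c : SP (CP n) d, defX s t 0 c = c)
    ∧ (∀ (r : ℝ) c, c ∈ UU n d s → defX s t r c ∈ UU n d s)
    ∧ (∀ (r : ℝ) c, c ∈ UU n d s → c ∈ UU n d t → defX s t r c ∈ UU n d t)
    ∧ (∀ r, ∀ a ∈ AA n d, defX s t r a = a) ∧ ∀ c, c ∈ UU n d s → defX s t 1 c ∈ AA n d := by
  have hne : ∀ (r : ℝ) (v : T n d), (∀ i, ev (v i).1 s ≠ 0) → ∀ i, defm s t r (v i).1 ≠ 0 := by
    intro r v hv i
    apply ne_zero_of_ev (s := s)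
    rw [(defm_ev hn hst r _).1]; exact hv i
  have hsurj := (Pr_open n d).surjective
  refine ⟨?_, ?_, ?_, ?_, ?_, ?_⟩
  · intro r c hc
    obtain ⟨v, rfl⟩ := hsurj c
    rw [mem_UU] at hc
    have hq := (IsOpenQuotientMap.id (X := ℝ)).prodMap (Pr_open n d)
    have := (hq.continuousAt_comp_iff
      (g := fun p : ℝ × SP (CP n) d => defX s t p.1 p.2) (x := (r, v))).1
    refine this ?_
    have e : ((fun p : ℝ × SP (CP n) d => defX s t p.1 p.2) ∘ Prod.map id (Pr n d))
      = Pr n d ∘ (fun p : ℝ × T n d => defT s t p.1 p.2) := by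
      funext p
      exact defX_mk _ _ _ _
    rw [e]
    refine ContinuousAt.comp (Pr_open n d).continuous.continuousAt ?_
    rw [continuousAt_pi]
    intro i
    refine (Topology.IsInducing.subtypeVal (t := {v : Fin (n + 1) → ℂ | v ≠ 0})).continuousAt_iff.2 ?_
    have hc1 : Continuous (fun p : ℝ × T n d => defm s t p.1 (p.2 i).1) := by
      unfold defm
      fun_prop
    refine hc1.continuousAt.congr ?_
    have : ∀ᶠ p in 𝓝 (r, v), defm s t p.1 (p.2 i).1 ≠ 0 :=
      hc1.continuousAt.eventually_ne (hne r v hc i)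
    filter_upwards [this] with p hp
    exact (defT_val _ _ _ _ _ hp).symm
  · intro c
    obtain ⟨v, rfl⟩ := hsurj c
    rw [defX_mk]
    congr 1
    funext i
    have e : defm s t 0 (v i).1 = (v i).1 := by simp [defm]
    refine Subtype.ext ?_
    rw [defT_val _ _ _ _ _ (by rw [e]; exact (v i).2), e]
  · intro r c hc
    obtain ⟨v, rfl⟩ := hsurj c
    rw [defX_mk]
    rw [mem_UU] at hc ⊢
    intro i
    rw [defT_val _ _ _ _ _ (hne r v hc i), (defm_ev hn hst r _).1]
    exact hc i
  · intro r c hc hc'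
    obtain ⟨v, rfl⟩ := hsurj c
    rw [defX_mk]
    rw [mem_UU] at hc hc' ⊢
    intro i
    rw [defT_val _ _ _ _ _ (hne r v hc i), (defm_ev hn hst r _).2]
    exact hc' i
  · intro r a ha
    obtain ⟨v, rfl⟩ := hsurj a
    rw [mem_AA] at ha
    rw [defX_mk]
    congr 1
    funext i
    have e : defm s t r (v i).1 = (v i).1 := by
      unfold defm
      rw [eq_lin hn _ (ha i), interp_lin hn hst, ← add_smul]
      simp
    refine Subtype.ext ?_
    rw [defT_val _ _ _ _ _ (by rw [e]; exact (v i).2), e]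
  · intro c hc
    obtain ⟨v, rfl⟩ := hsurj c
    rw [mem_UU] at hc
    rw [defX_mk, mem_AA]
    intro i k hk
    rw [defT_val _ _ _ _ _ (hne 1 v hc i)]
    have h1 : k.1 ≠ 0 := by omega
    have h2 : k.1 ≠ 1 := by omega
    simp [defm, interp, lin, h1, h2]

lemma HD_holds {n : ℕ} (d : ℕ) (hn : 1 ≤ n) : HD (AA n d) (UU n d) := by
  intro s t
  by_cases hst : s = t
  · subst hst
    have h1 : s ≠ s + 1 := by simp
    obtain ⟨a, b, c, d', e, f⟩ := defX_props (d := d) hn h1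
    refine ⟨fun r => defX s (s + 1) r.1, ?_, fun c => b c, ?_, fun r a ha => e _ a ha, ?_⟩
    · intro r x hx _
      exact ContinuousAt.comp (f := fun p : I × SP (CP n) d => (p.1.1, p.2)) (x := (r, x))
        (g := fun p : ℝ × SP (CP n) d => defX s (s + 1) p.1 p.2) (a r.1 x hx) (by fun_prop)
    · intro r x hx _
      exact ⟨c _ x hx, c _ x hx⟩
    · intro x hx _
      exact f x hx
  · obtain ⟨a, b, c, d', e, f⟩ := defX_props (d := d) hn hst
    refine ⟨fun r => defX s t r.1, ?_, fun c => b c, ?_, fun r a ha => e _ a ha, ?_⟩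
    · intro r x hx _
      exact ContinuousAt.comp (f := fun p : I × SP (CP n) d => (p.1.1, p.2)) (x := (r, x))
        (g := fun p : ℝ × SP (CP n) d => defX s t p.1 p.2) (a r.1 x hx) (by fun_prop)
    · intro r x hx hx'
      exact ⟨c _ x hx, d' _ x hx hx'⟩
    · intro x hx _
      exact f x hx

end PiTwo

namespace PiTwo
open scoped unitInterval Topology.Homotopy
lemma lin_one_ne (n : ℕ) : lin n 1 0 ≠ 0 := by
  intro h
  have := congrFun h 0
  simp [lin] at this

noncomputable def e0 (n : ℕ) : W n := ⟨lin n 1 0, lin_one_ne n⟩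

noncomputable def x0 (n d : ℕ) : SP (CP n) d := Pr n d (fun _ => e0 n)

lemma x0_mem (n d : ℕ) : x0 n d ∈ AA n d := by
  refine mem_AA.2 fun i k hk => ?_
  have h1 : k.1 ≠ 0 := by omega
  simp [e0, lin, h1]

lemma path_one {ι : Type*} [Finite ι] (a : ι → ℂ) (ha : ∀ k, a k ≠ 0) :
    ∃ z : I → ℂ, Continuous z ∧ z 0 = 0 ∧ z 1 = 1 ∧ ∀ r k, (1 - z r) * a k + z r ≠ 0 := by
  let B : Set ℂ := {z | ∃ k, (1 - z) * a k + z = 0}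
  have hB : B.Countable := by
    refine (Set.countable_range (fun k => a k / (a k - 1))).mono ?_
    rintro z ⟨k, hk⟩
    refine ⟨k, ?_⟩
    have h1 : a k - 1 ≠ 0 := by
      intro h
      have : a k = 1 := by linear_combination h
      rw [this] at hk
      simp at hk
    field_simp
    linear_combination hk
  have hp : IsPathConnected Bᶜ := Set.Countable.isPathConnected_compl_of_one_lt_rank
    (by rw [Complex.rank_real_complex]; exact_mod_cast one_lt_two) hB
  have h0 : (0 : ℂ) ∈ Bᶜ := by
    rintro ⟨k, hk⟩
    simp at hk
    exact ha k hk
  have h1 : (1 : ℂ) ∈ Bᶜ := by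
    rintro ⟨k, hk⟩
    simp at hk
  obtain ⟨γ, hγ⟩ := hp.joinedIn _ h0 _ h1
  refine ⟨γ, γ.continuous, γ.source, γ.target, fun r k h => hγ r ⟨k, h⟩⟩

lemma path_lemma {n d : ℕ} (hn : 1 ≤ n) (s : Fin 4 → ℂ) (v : T n d)
    (hv : ∀ k i, ev (v i).1 (s k) ≠ 0) :
    ∃ γ : I → SP (CP n) d, Continuous γ ∧ γ 0 = Pr n d v ∧ γ 1 = x0 n d ∧
      ∀ r k, γ r ∈ UU n d (s k) := by
  have h := fun i => path_one (fun k => ev (v i).1 (s k)) (fun k => hv k i)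
  choose z hz h0 h1 hne using h
  have hev : ∀ r k i, ev ((1 - z i r) • (v i).1 + z i r • lin n 1 0) (s k) ≠ 0 := by
    intro r k i
    rw [ev_add, ev_smul, ev_smul, ev_lin hn]
    simpa using hne i r k
  refine ⟨fun r => Pr n d (fun i => ⟨(1 - z i r) • (v i).1 + z i r • lin n 1 0,
    ne_zero_of_ev (hev r 0 i)⟩), ?_, ?_, ?_, ?_⟩
  · refine (Pr_open n d).continuous.comp ?_
    refine continuous_pi fun i => Continuous.subtype_mk ?_ _
    have := hz i
    fun_prop
  · refine congrArg (Pr n d) ?_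
    funext i
    refine Subtype.ext ?_
    simp [h0]
  · unfold x0
    refine congrArg (Pr n d) ?_
    funext i
    refine Subtype.ext ?_
    simp [h1, e0]
  · intro r k
    exact mem_UU.2 fun i => hev r k i

lemma HP_holds {n : ℕ} (d : ℕ) (hn : 1 ≤ n) : HP (AA n d) (UU n d) := by
  intro s c hc
  by_cases hA : c ∈ AA n d
  · exact ⟨fun _ => c, continuous_const, rfl, hA, fun _ k => hc k, fun _ _ => rfl⟩
  · obtain ⟨v, rfl⟩ := (Pr_open n d).surjective c
    obtain ⟨γ, h1, h2, h3, h4⟩ := path_lemma hn s v (fun k => mem_UU.1 (hc k))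
    exact ⟨γ, h1, h2, by rw [h3]; exact x0_mem n d, h4, fun h => absurd h hA⟩

lemma path_x0 {n : ℕ} (d : ℕ) (hn : 1 ≤ n) (c : SP (CP n) d) :
    ∃ γ : I → SP (CP n) d, Continuous γ ∧ γ 0 = c ∧ γ 1 = x0 n d := by
  obtain ⟨v, rfl⟩ := (Pr_open n d).surjective c
  obtain ⟨s, hs⟩ := good_exists v
  obtain ⟨γ, h1, h2, h3, -⟩ := path_lemma hn (fun _ => s) v (fun _ => hs)
  exact ⟨γ, h1, h2, h3⟩

lemma into_AA {n : ℕ} (d : ℕ) (hn : 1 ≤ n) (f : Ω^ (Fin 2) (SP (CP n) d) (x0 n d)) :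
    ∃ g : Ω^ (Fin 2) (SP (CP n) d) (x0 n d), GenLoop.Homotopic f g ∧ ∀ t, g t ∈ AA n d :=
  grid_lemma (HP_holds d hn) (HD_holds d hn) (UU_open n d) (UU_cover n d) (x0_mem n d) f

end PiTwo

namespace PiTwo
open scoped unitInterval Topology.Homotopy
abbrev VV (n d : ℕ) := EuclideanSpace ℂ (Fin (d * n + 1))

noncomputable def wv {n d : ℕ} (v : T n d) : VV n d :=
  WithLp.toLp 2 (fun k => ∏ i, ev (v i).1 ((k : ℕ) : ℂ))

@[fun_prop]
lemma wv_cont {n d : ℕ} : Continuous (wv : T n d → VV n d) := by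
  unfold wv
  refine (PiLp.continuous_toLp 2 _).comp ?_
  fun_prop

lemma eval_inj {m : ℕ} (p q : Polynomial ℂ) (hp : p.natDegree < m) (hq : q.natDegree < m)
    (h : ∀ k : Fin m, p.eval ((k : ℕ) : ℂ) = q.eval ((k : ℕ) : ℂ)) : p = q := by
  refine Polynomial.eq_of_natDegree_lt_card_of_eval_eq p q (f := fun k : Fin m => ((k : ℕ) : ℂ))
    ?_ h ?_
  · intro a b hab
    simpa [Fin.val_inj] using hab
  · simp [hp, hq]

lemma prod_poly_deg {n d : ℕ} (v : T n d) : (∏ i, poly (v i).1).natDegree ≤ d * n := by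
  refine (Polynomial.natDegree_prod_le _ _).trans ?_
  refine (Finset.sum_le_sum fun i _ => poly_deg (v i).1).trans ?_
  simp

lemma prod_poly_ne {n d : ℕ} (v : T n d) : (∏ i, poly (v i).1) ≠ 0 :=
  Finset.prod_ne_zero_iff.2 fun i _ => poly_ne _ (v i).2

lemma wv_ne {n d : ℕ} (v : T n d) : wv v ≠ 0 := by
  intro h
  apply prod_poly_ne v
  refine eval_inj (m := d * n + 1) _ _ (Nat.lt_succ_of_le (prod_poly_deg v)) (by simp) fun k => ?_
  have : wv v k = 0 := by rw [h]; rfl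
  simpa [Polynomial.eval_prod, poly_eval, wv] using this

noncomputable def PP {n d : ℕ} (w : VV n d) : VV n d →L[ℂ] VV n d :=
  (inner ℂ w w)⁻¹ • InnerProductSpace.rankOne ℂ w w

lemma PP_smul {n d : ℕ} (w : VV n d) (c : ℂ) (hc : c ≠ 0) : PP (c • w) = PP w := by
  by_cases hw : w = 0
  · simp [hw]
  have h1 : inner ℂ w w ≠ 0 := inner_self_ne_zero.2 hw
  have h2 : (starRingEnd ℂ) c ≠ 0 := by simpa using hc
  ext1 z
  simp only [PP, InnerProductSpace.rankOne_apply, smul_apply, inner_smul_left,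
    inner_smul_right, smul_smul]
  congr 1
  field_simp

lemma PP_apply {n d : ℕ} (w z : VV n d) : PP w z = ((inner ℂ w w)⁻¹ * inner ℂ w z) • w := by
  simp [PP, smul_smul]

lemma PP_self {n d : ℕ} (w : VV n d) (hw : w ≠ 0) : PP w w = w := by
  have h1 : inner ℂ w w ≠ 0 := inner_self_ne_zero.2 hw
  rw [PP_apply, inv_mul_cancel₀ h1, one_smul]

lemma wv_inv {n d : ℕ} {v v' : T n d} (h : Pr n d v = Pr n d v') :
    ∃ c : ℂ, c ≠ 0 ∧ wv v = c • wv v' := by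
  obtain ⟨τ, c, hc⟩ := (Pr_eq _ _).1 h
  refine ⟨∏ i, (c i : ℂ), Finset.prod_ne_zero_iff.2 fun i _ => (c i).ne_zero, ?_⟩
  ext k
  simp only [wv, PiLp.smul_apply, smul_eq_mul]
  rw [← Equiv.prod_comp τ, ← Finset.prod_mul_distrib]
  refine Finset.prod_congr rfl fun i _ => ?_
  rw [hc i, Units.smul_def, ev_smul]

noncomputable def PX {n d : ℕ} (c : SP (CP n) d) : VV n d →L[ℂ] VV n d :=
  PP (wv (Function.surjInv (Pr_open n d).surjective c))

lemma PX_mk {n d : ℕ} (v : T n d) : PX (Pr n d v) = PP (wv v) := by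
  obtain ⟨c, hc, h⟩ := wv_inv (Function.surjInv_eq (Pr_open n d).surjective (Pr n d v))
  unfold PX
  rw [h, PP_smul _ _ hc]

noncomputable def LL (n d : ℕ) : LineFam (SP (CP n) d) (VV n d) where
  P := PX
  cont := by
    rw [← (Pr_open n d).continuous_comp_iff]
    have e : PX ∘ Pr n d = fun v => PP (wv v) := funext PX_mk
    rw [e]
    unfold PP
    have h1 : Continuous (fun v : T n d => inner ℂ (wv v) (wv v)) := by fun_prop
    have h2 : Continuous (fun v : T n d => InnerProductSpace.rankOne ℂ (wv v) (wv v)) := by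
      rw [continuous_clm_apply]
      intro y
      simp only [InnerProductSpace.rankOne_apply]
      fun_prop
    exact (h1.inv₀ fun v => inner_self_ne_zero.2 (wv_ne v)).smul h2
  idem := by
    intro c z
    obtain ⟨v, rfl⟩ := (Pr_open n d).surjective c
    rw [PX_mk, PP_apply (wv v) z, map_smul, PP_self _ (wv_ne v)]
  rank := by
    intro c z z' h h' hz
    obtain ⟨v, rfl⟩ := (Pr_open n d).surjective c
    rw [PX_mk, PP_apply] at h h'
    set a := (inner ℂ (wv v) (wv v))⁻¹ * inner ℂ (wv v) z
    have ha : a ≠ 0 := by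
      intro ha
      rw [ha, zero_smul] at h
      exact hz h.symm
    refine ⟨((inner ℂ (wv v) (wv v))⁻¹ * inner ℂ (wv v) z') * a⁻¹, ?_⟩
    conv_rhs => rw [← h]
    rw [smul_smul, inv_mul_cancel_right₀ ha]
    exact h'.symm
  exists_ne := by
    intro c
    obtain ⟨v, rfl⟩ := (Pr_open n d).surjective c
    refine ⟨wv v, wv_ne v, ?_⟩
    rw [PX_mk, PP_self _ (wv_ne v)]

lemma LL_mk {n d : ℕ} (v : T n d) : (LL n d).P (Pr n d v) = PP (wv v) := PX_mk v

end PiTwo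

namespace PiTwo
open scoped unitInterval Topology.Homotopy
open Polynomial

noncomputable def lf (a : ℂ × ℂ) : Polynomial ℂ := C a.1 + C a.2 * X

lemma lf_deg (a : ℂ × ℂ) : (lf a).natDegree ≤ 1 := by
  unfold lf
  compute_degree

lemma lf_ne (a : ℂ × ℂ) (h : a ≠ 0) : lf a ≠ 0 := by
  intro h0
  apply h
  have h1 : (lf a).coeff 0 = 0 := by rw [h0]; simp
  have h2 : (lf a).coeff 1 = 0 := by rw [h0]; simp
  simp [lf] at h1 h2
  exact Prod.ext h1 h2

lemma lf_smul (c : ℂ) (a : ℂ × ℂ) : lf (c • a) = C c * lf a := by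
  simp [lf]; ring

lemma factor_exists : ∀ (d : ℕ) (p : Polynomial ℂ), p ≠ 0 → p.natDegree ≤ d →
    ∃ (a : Fin d → ℂ × ℂ) (c : ℂ), (∀ i, a i ≠ 0) ∧ c ≠ 0 ∧ p = C c * ∏ i, lf (a i) := by
  intro d
  induction d with
  | zero =>
    intro p hp hd
    have := eq_C_of_natDegree_le_zero hd
    refine ⟨fun _ => 0, p.coeff 0, fun i => i.elim0, ?_, by simpa using this⟩
    intro h
    rw [h] at this
    exact hp (by simpa using this)
  | succ d ih =>
    intro p hp hd
    by_cases h : p.natDegree ≤ d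
    · obtain ⟨a, c, ha, hc, e⟩ := ih p hp h
      refine ⟨Fin.cons (1, 0) a, c, ?_, hc, ?_⟩
      · intro i
        refine Fin.cases ?_ (fun i => ?_) i
        · simp
        · simpa using ha i
      · rw [Fin.prod_univ_succ]
        simp only [Fin.cons_zero, Fin.cons_succ]
        rw [← show 1 = lf (1, 0) by simp [lf], one_mul]
        exact e
    · have hd' : p.natDegree = d + 1 := by omega
      obtain ⟨z, hz⟩ := IsAlgClosed.exists_root p (by
        intro h0
        have := natDegree_eq_zero_iff_degree_le_zero.2 h0.le
        omega)
      obtain ⟨q, rfl⟩ := dvd_iff_isRoot.2 hz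
      have hq : q ≠ 0 := right_ne_zero_of_mul hp
      have hq' : q.natDegree ≤ d := by
        rw [natDegree_mul (X_sub_C_ne_zero z) hq, natDegree_X_sub_C] at hd'
        omega
      obtain ⟨a, c, ha, hc, e⟩ := ih q hq hq'
      refine ⟨Fin.cons (-z, 1) a, c, ?_, hc, ?_⟩
      · intro i
        refine Fin.cases ?_ (fun i => ?_) i
        · simp
        · simpa using ha i
      · rw [Fin.prod_univ_succ]
        simp only [Fin.cons_zero, Fin.cons_succ]
        rw [← show X - C z = lf (-z, 1) by simp [lf]; ring]
        rw [mul_left_comm, ← e]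

lemma find_factor {d : ℕ} (a a' : Fin (d + 1) → ℂ × ℂ) (ha : ∀ i, a i ≠ 0) (ha' : ∀ i, a' i ≠ 0)
    (c c' : ℂ) (hc : c ≠ 0) (h : C c * ∏ i, lf (a i) = C c' * ∏ i, lf (a' i)) :
    ∃ (j : Fin (d + 1)) (u : ℂˣ), a j = u • a' 0 := by
  by_cases hb : (a' 0).2 = 0
  · have hcoeff : ∀ b : Fin (d + 1) → ℂ × ℂ, (∏ i, lf (b i)).coeff (d + 1) = ∏ i, (b i).2 := by
      intro b
      have := coeff_prod_of_natDegree_le Finset.univ (fun i => lf (b i)) 1 (fun i _ => lf_deg _)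
      simp only [Finset.card_univ, Fintype.card_fin, mul_one] at this
      rw [this]
      simp [lf]
    have h1 := congrArg (fun p => coeff p (d + 1)) h
    simp only [coeff_C_mul, hcoeff] at h1
    rw [Finset.prod_eq_zero (f := fun i => (a' i).2) (Finset.mem_univ 0) hb, mul_zero] at h1
    obtain ⟨j, -, hj⟩ := Finset.prod_eq_zero_iff.1 ((mul_eq_zero.1 h1).resolve_left hc)
    have h2 : (a j).1 ≠ 0 := fun h => ha j (Prod.ext h hj)
    have h3 : (a' 0).1 ≠ 0 := fun h => ha' 0 (Prod.ext h hb)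
    refine ⟨j, Units.mk0 ((a j).1 / (a' 0).1) (div_ne_zero h2 h3), ?_⟩
    refine Prod.ext ?_ ?_
    · simp [Units.smul_def, h3]
    · simp [Units.smul_def, hb, hj]
  · have h1 := congrArg (fun p => eval (-(a' 0).1 / (a' 0).2) p) h
    simp only [eval_mul, eval_C, eval_prod] at h1
    rw [Finset.prod_eq_zero (i := (0 : Fin (d + 1))) (f := fun i => eval (-(a' 0).1 / (a' 0).2) (lf (a' i)))
      (Finset.mem_univ 0) (by simp [lf]; field_simp; ring), mul_zero] at h1
    obtain ⟨j, -, hj⟩ := Finset.prod_eq_zero_iff.1 ((mul_eq_zero.1 h1).resolve_left hc)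
    simp [lf] at hj
    have h2 : (a j).2 ≠ 0 := by
      intro h
      rw [h] at hj
      exact ha j (Prod.ext (by simpa using hj) h)
    refine ⟨j, Units.mk0 ((a j).2 / (a' 0).2) (div_ne_zero h2 hb), ?_⟩
    refine Prod.ext ?_ ?_
    · simp [Units.smul_def]
      field_simp at hj ⊢
      linear_combination hj
    · simp [Units.smul_def, hb]

lemma factor_unique : ∀ (d : ℕ) (a a' : Fin d → ℂ × ℂ) (_ : ∀ i, a i ≠ 0) (_ : ∀ i, a' i ≠ 0)
    (c c' : ℂ) (_ : c ≠ 0) (_ : C c * ∏ i, lf (a i) = C c' * ∏ i, lf (a' i)),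
    ∃ (τ : Equiv.Perm (Fin d)) (u : Fin d → ℂˣ), ∀ i, a (τ i) = u i • a' i := by
  intro d
  induction d with
  | zero =>
    intro a a' _ _ c c' _ _
    exact ⟨Equiv.refl _, fun _ => 1, fun i => i.elim0⟩
  | succ d ih =>
    intro a a' ha ha' c c' hc h
    obtain ⟨j, u, hj⟩ := find_factor a a' ha ha' c c' hc h
    have e : ∏ i, lf (a i) = ∏ i, lf (a (Equiv.swap 0 j i)) :=
      (Equiv.prod_comp (Equiv.swap 0 j) (fun i => lf (a i))).symm
    rw [e, Fin.prod_univ_succ, Fin.prod_univ_succ, Equiv.swap_apply_left, hj, Units.smul_def,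
      lf_smul] at h
    have h' : C (c * u) * ∏ i : Fin d, lf (a (Equiv.swap 0 j i.succ)) =
        C c' * ∏ i : Fin d, lf (a' i.succ) := by
      apply mul_left_cancel₀ (lf_ne _ (ha' 0))
      rw [C_mul]
      linear_combination h
    obtain ⟨τ, w, hw⟩ := ih (fun i => a (Equiv.swap 0 j i.succ)) (fun i => a' i.succ)
      (fun i => ha _) (fun i => ha' _) (c * u) c' (mul_ne_zero hc u.ne_zero) h'
    refine ⟨Equiv.Perm.decomposeFin.symm (j, τ), Fin.cons u w, ?_⟩
    intro i
    refine Fin.cases ?_ (fun i => ?_) i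
    · rw [Equiv.Perm.decomposeFin_symm_apply_zero]
      simpa using hj
    · rw [Equiv.Perm.decomposeFin_symm_apply_succ]
      simpa using hw i

end PiTwo

namespace PiTwo
open scoped unitInterval Topology.Homotopy
open Polynomial

abbrev EE (d : ℕ) := Fin (d + 1) → ℂ

noncomputable def vals {n d : ℕ} (v : T n d) : EE d := fun k => ∏ i, ev (v i).1 ((k : ℕ) : ℂ)

@[fun_prop]
lemma vals_cont {n d : ℕ} : Continuous (vals : T n d → EE d) := by
  unfold vals
  fun_prop

abbrev K2 (d : ℕ) := Fin d → Metric.sphere (0 : ℂ × ℂ) 1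

lemma lin_ne {n : ℕ} (hn : 1 ≤ n) (a : ℂ × ℂ) (h : a ≠ 0) : lin n a.1 a.2 ≠ 0 := by
  intro h0
  apply h
  refine Prod.ext ?_ ?_
  · have := congrFun h0 0
    simpa [lin] using this
  · have := congrFun h0 ⟨1, by omega⟩
    simpa [lin] using this

noncomputable def jT {n d : ℕ} (hn : 1 ≤ n) (a : K2 d) : T n d := fun i =>
  ⟨lin n (a i).1.1 (a i).1.2, lin_ne hn _ (ne_zero_of_mem_unit_sphere (a i))⟩

lemma jT_cont {n d : ℕ} (hn : 1 ≤ n) : Continuous (jT hn : K2 d → T n d) := by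
  refine continuous_pi fun i => Continuous.subtype_mk ?_ _
  refine continuous_pi fun k => ?_
  simp only [lin]
  split_ifs <;> fun_prop

lemma jT_mem {n d : ℕ} (hn : 1 ≤ n) (a : K2 d) : ∀ i (k : Fin (n + 1)), 2 ≤ k.1 →
    (jT hn a i).1 k = 0 := by
  intro i k hk
  have h1 : k.1 ≠ 0 := by omega
  have h2 : k.1 ≠ 1 := by omega
  simp [jT, lin, h1, h2]

lemma vals_lin {n d : ℕ} (hn : 1 ≤ n) (v : T n d) (a : Fin d → ℂ × ℂ)
    (h : ∀ i, (v i).1 = lin n (a i).1 (a i).2) (k : Fin (d + 1)) :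
    vals v k = (∏ i, lf (a i)).eval ((k : ℕ) : ℂ) := by
  simp only [vals, eval_prod]
  refine Finset.prod_congr rfl fun i _ => ?_
  rw [h i, ev_lin hn]
  simp [lf]

lemma prod_lf_deg {d : ℕ} (a : Fin d → ℂ × ℂ) : (∏ i, lf (a i)).natDegree ≤ d := by
  refine (natDegree_prod_le _ _).trans ?_
  refine (Finset.sum_le_sum fun i _ => lf_deg (a i)).trans ?_
  simp

lemma exists_lin {n d : ℕ} (hn : 1 ≤ n) (v : T n d)
    (hv : ∀ i (k : Fin (n + 1)), 2 ≤ k.1 → (v i).1 k = 0) :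
    ∃ a : Fin d → ℂ × ℂ, (∀ i, a i ≠ 0) ∧ ∀ i, (v i).1 = lin n (a i).1 (a i).2 := by
  refine ⟨fun i => ((v i).1 0, (v i).1 ⟨1, by omega⟩), fun i h => ?_, fun i => eq_lin hn _ (hv i)⟩
  apply (v i).2
  have := eq_lin hn _ (hv i)
  rw [this]
  have h1 := congrArg Prod.fst h
  have h2 := congrArg Prod.snd h
  simp only at h1 h2
  rw [h1, h2]
  funext k
  simp [lin]

lemma vals_ne {n d : ℕ} (hn : 1 ≤ n) (v : T n d)
    (hv : ∀ i (k : Fin (n + 1)), 2 ≤ k.1 → (v i).1 k = 0) : vals v ≠ 0 := by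
  obtain ⟨a, ha, e⟩ := exists_lin hn v hv
  intro h
  have : ∏ i, lf (a i) = 0 := by
    refine eval_inj (m := d + 1) _ _ (Nat.lt_succ_of_le (prod_lf_deg a)) (by simp) fun k => ?_
    rw [← vals_lin hn v a e, h]
    simp
  exact Finset.prod_ne_zero_iff.2 (fun i _ => lf_ne _ (ha i)) this

lemma vals_unique {n d : ℕ} (hn : 1 ≤ n) (v v' : T n d)
    (hv : ∀ i (k : Fin (n + 1)), 2 ≤ k.1 → (v i).1 k = 0)
    (hv' : ∀ i (k : Fin (n + 1)), 2 ≤ k.1 → (v' i).1 k = 0) (c c' : ℂ) (hc : c ≠ 0)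
    (h : c • vals v = c' • vals v') : Pr n d v = Pr n d v' := by
  obtain ⟨a, ha, e⟩ := exists_lin hn v hv
  obtain ⟨a', ha', e'⟩ := exists_lin hn v' hv'
  have hp : C c * ∏ i, lf (a i) = C c' * ∏ i, lf (a' i) := by
    refine eval_inj (m := d + 1) _ _ (Nat.lt_succ_of_le ?_) (Nat.lt_succ_of_le ?_) fun k => ?_
    · exact (natDegree_C_mul_le _ _).trans (prod_lf_deg a)
    · exact (natDegree_C_mul_le _ _).trans (prod_lf_deg a')
    · rw [eval_mul, eval_mul, eval_C, eval_C, ← vals_lin hn v a e, ← vals_lin hn v' a' e']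
      simpa using congrFun h k
  obtain ⟨τ, u, hu⟩ := factor_unique d a a' ha ha' c c' hc hp
  refine (Pr_eq _ _).2 ⟨τ, u, fun i => ?_⟩
  rw [e, e', hu i]
  funext k
  simp only [lin, Units.smul_def, Pi.smul_apply, smul_eq_mul, Prod.smul_fst, Prod.smul_snd]
  split_ifs <;> simp

lemma vals_exists {n d : ℕ} (hn : 1 ≤ n) (y : EE d) (hy : y ≠ 0) :
    ∃ (a : K2 d) (c : ℂ), c ≠ 0 ∧ y = c • vals (jT (n := n) hn a) := by
  let nd : Fin (d + 1) → ℂ := fun k => ((k : ℕ) : ℂ)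
  have hnd : Set.InjOn nd (Finset.univ : Finset (Fin (d + 1))) := by
    intro a _ b _ hab
    simpa [nd, Fin.val_inj] using hab
  let p := Lagrange.interpolate Finset.univ nd y
  have hp : ∀ k, p.eval (nd k) = y k := fun k =>
    Lagrange.eval_interpolate_at_node y hnd (Finset.mem_univ k)
  have hdeg : p.degree < (d + 1 : ℕ) := by
    have := Lagrange.degree_interpolate_lt y hnd
    rwa [Finset.card_univ, Fintype.card_fin] at this
  have hp0 : p ≠ 0 := by
    intro h
    apply hy
    funext k
    rw [← hp k, h]
    simp
  have hdeg' : p.natDegree ≤ d := by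
    have := (natDegree_lt_iff_degree_lt hp0).2 hdeg
    omega
  obtain ⟨a, c, ha, hc, e⟩ := factor_exists d p hp0 hdeg'
  have hN : ∀ i, ‖a i‖ ≠ 0 := fun i => norm_ne_zero_iff.2 (ha i)
  let b : K2 d := fun i => ⟨((‖a i‖⁻¹ : ℝ) : ℂ) • a i, by
    have := hN i
    simp [norm_smul, this]⟩
  refine ⟨b, c * ∏ i, (‖a i‖ : ℂ), mul_ne_zero hc (Finset.prod_ne_zero_iff.2 fun i _ => by
    exact_mod_cast hN i), ?_⟩
  funext k
  rw [Pi.smul_apply, vals_lin hn (jT hn b) (fun i => (b i).1) (fun i => rfl), ← hp k, e]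
  have e2 : ∏ i, lf (b i).1 = C (∏ i, ((‖a i‖⁻¹ : ℝ) : ℂ)) * ∏ i, lf (a i) := by
    rw [map_prod, ← Finset.prod_mul_distrib]
    exact Finset.prod_congr rfl fun i _ => lf_smul _ _
  rw [e2]
  simp only [eval_mul, eval_C, smul_eq_mul, nd]
  have e3 : (∏ i, (‖a i‖ : ℂ)) * ∏ i, ((‖a i‖⁻¹ : ℝ) : ℂ) = 1 := by
    rw [← Finset.prod_mul_distrib]
    refine Finset.prod_eq_one fun i _ => ?_
    rw [← Complex.ofReal_mul, mul_inv_cancel₀ (hN i), Complex.ofReal_one]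
  rw [mul_assoc c, ← mul_assoc (∏ i, (‖a i‖ : ℂ)), e3, one_mul]

lemma q_exists {n : ℕ} (d : ℕ) (hn : 1 ≤ n) : ∃ q : {y : EE d // y ≠ 0} → SP (CP n) d,
    Continuous q ∧ ∀ y (v : T n d) (c : ℂ), (∀ i (k : Fin (n + 1)), 2 ≤ k.1 → (v i).1 k = 0) →
      y.1 = c • vals v → q y = Pr n d v := by
  have hex := fun y : {y : EE d // y ≠ 0} => vals_exists (n := n) hn y.1 y.2
  choose a c hc h using hex
  let q : {y : EE d // y ≠ 0} → SP (CP n) d := fun y => Pr n d (jT hn (a y))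
  have hq : ∀ y (v : T n d) (c : ℂ), (∀ i (k : Fin (n + 1)), 2 ≤ k.1 → (v i).1 k = 0) →
      y.1 = c • vals v → q y = Pr n d v := by
    intro y v c' hv hy
    exact vals_unique hn _ _ (jT_mem hn _) hv (c y) c' (hc y) (by rw [← h y, hy])
  refine ⟨q, ?_, hq⟩
  -- the parametrization of the sphere
  have hvn : ∀ b : K2 d, ‖vals (jT (n := n) hn b)‖ ≠ 0 := fun b =>
    norm_ne_zero_iff.2 (vals_ne hn _ (jT_mem hn b))
  let M : K2 d × Metric.sphere (0 : ℂ) 1 → Metric.sphere (0 : EE d) 1 := fun p =>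
    ⟨p.2.1 • ((‖vals (jT (n := n) hn p.1)‖⁻¹ : ℝ) : ℂ) • vals (jT (n := n) hn p.1), by
      have := hvn p.1
      simp [norm_smul, this]⟩
  have hj := jT_cont (d := d) hn
  have hM : Continuous M := by
    refine Continuous.subtype_mk ?_ _
    have h1 : Continuous (fun p : K2 d × Metric.sphere (0 : ℂ) 1 =>
      ‖vals (jT (n := n) hn p.1)‖⁻¹) := Continuous.inv₀ (by fun_prop) fun p => hvn p.1
    have h2 : Continuous (fun p : K2 d × Metric.sphere (0 : ℂ) 1 =>
      vals (jT (n := n) hn p.1)) := by fun_prop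
    exact (continuous_subtype_val.comp continuous_snd).smul
      ((Complex.continuous_ofReal.comp h1).smul h2)
  have hMs : Function.Surjective M := by
    intro y
    have hy0 : y.1 ≠ 0 := ne_zero_of_mem_unit_sphere y
    set y' : {y : EE d // y ≠ 0} := ⟨y.1, hy0⟩ with hy'
    have hcn : ‖c y'‖ ≠ 0 := norm_ne_zero_iff.2 (hc y')
    have hc2 : ((‖c y'‖ : ℝ) : ℂ) ≠ 0 := by exact_mod_cast hcn
    refine ⟨(a y', ⟨c y' / ‖c y'‖, by simp [hcn]⟩), Subtype.ext ?_⟩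
    have hy1 : ‖c y'‖ * ‖vals (jT (n := n) hn (a y'))‖ = 1 := by
      rw [← norm_smul, ← h y']
      simp [hy']
    have hy2 : ‖vals (jT (n := n) hn (a y'))‖⁻¹ = ‖c y'‖ := by
      rw [inv_eq_iff_eq_inv]
      exact eq_inv_of_mul_eq_one_right hy1
    simp only [M]
    rw [hy2, smul_smul, div_mul_cancel₀ _ hc2, ← h y']
  have hMq : Topology.IsQuotientMap M := hM.isClosedMap.isQuotientMap hM hMs
  have hqS : Continuous (fun y : Metric.sphere (0 : EE d) 1 =>
      q ⟨y.1, ne_zero_of_mem_unit_sphere y⟩) := by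
    rw [hMq.continuous_iff]
    have e : (fun y : Metric.sphere (0 : EE d) 1 => q ⟨y.1, ne_zero_of_mem_unit_sphere y⟩) ∘ M
        = fun p => Pr n d (jT hn p.1) := by
      funext p
      refine hq _ _ (p.2.1 * ((‖vals (jT (n := n) hn p.1)‖⁻¹ : ℝ) : ℂ)) (jT_mem hn _) ?_
      simp only [M, smul_smul]
    rw [e]
    exact (Pr_open n d).continuous.comp (hj.comp continuous_fst)
  have hne : ∀ y : {y : EE d // y ≠ 0}, ‖y.1‖ ≠ 0 := fun y => norm_ne_zero_iff.2 y.2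
  let N : {y : EE d // y ≠ 0} → Metric.sphere (0 : EE d) 1 := fun y =>
    ⟨((‖y.1‖⁻¹ : ℝ) : ℂ) • y.1, by
      have := hne y
      simp [norm_smul, this]⟩
  have hN : Continuous N := by
    refine Continuous.subtype_mk ?_ _
    have h1 : Continuous (fun y : {y : EE d // y ≠ 0} => ‖y.1‖⁻¹) :=
      Continuous.inv₀ (by fun_prop) hne
    exact (Complex.continuous_ofReal.comp h1).smul continuous_subtype_val
  have e : q = (fun y : Metric.sphere (0 : EE d) 1 =>
      q ⟨y.1, ne_zero_of_mem_unit_sphere y⟩) ∘ N := by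
    funext y
    refine hq y _ ((‖y.1‖ : ℂ) * c ⟨(N y).1, ne_zero_of_mem_unit_sphere (N y)⟩) (jT_mem hn _) ?_
    rw [← smul_smul, ← h ⟨(N y).1, ne_zero_of_mem_unit_sphere (N y)⟩]
    simp only [N, smul_smul]
    rw [← Complex.ofReal_mul, mul_inv_cancel₀ (hne y), Complex.ofReal_one, one_smul]
  rw [e]
  exact hqS.comp hN

end PiTwo

namespace PiTwo
open scoped unitInterval Topology.Homotopy
lemma zero_bd : (0 : Sq) ∈ Cube.boundary (Fin 2) := ⟨0, Or.inl rfl⟩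

lemma null_of_drag {X : Type*} [TopologicalSpace X] {x y : X} (f : Ω^ (Fin 2) X x)
    (f' : Ω^ (Fin 2) X y) (H : I × Sq → X) (hH : Continuous H) (γ : I → X)
    (h0 : ∀ u, H (0, u) = f u) (hb : ∀ s, ∀ u ∈ Cube.boundary (Fin 2), H (s, u) = γ s)
    (h1 : ∀ u, H (1, u) = f' u) (hf' : GenLoop.Homotopic f' GenLoop.const) :
    GenLoop.Homotopic f GenLoop.const := by
  obtain ⟨K⟩ := hf'
  let H' : f.1.Homotopy f'.1 := ⟨⟨H, hH⟩, h0, h1⟩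
  let Q := H'.trans K.toHomotopy
  refine null_of_free f Q Q.continuous (fun s => Q (s, 0)) ?_ ?_ ?_
  · intro u
    exact Q.apply_zero u
  · intro s u hu
    simp only [Q]
    rw [ContinuousMap.Homotopy.trans_apply, ContinuousMap.Homotopy.trans_apply]
    split_ifs with h
    · exact (hb _ u hu).trans (hb _ 0 zero_bd).symm
    · have a := K.prop' ⟨2 * (s : ℝ) - 1, by
        have := s.2.2
        constructor <;> linarith⟩ u hu
      have b := K.prop' ⟨2 * (s : ℝ) - 1, by
        have := s.2.2
        constructor <;> linarith⟩ 0 zero_bd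
      refine a.trans (Eq.trans ?_ b.symm)
      exact (f'.2 u hu).trans (f'.2 0 zero_bd).symm
  · intro u
    rw [Q.apply_one, Q.apply_one]
    rfl

lemma null_in_AA {n d : ℕ} (hn : 1 ≤ n) (hd : 1 ≤ d) (g : Ω^ (Fin 2) (SP (CP n) d) (x0 n d))
    (hg : ∀ t, g t ∈ AA n d) (e : VV n d) (h : Deg (LL n d) g e 0) :
    GenLoop.Homotopic g GenLoop.const := by
  obtain ⟨G, hG, hGP, hG0, hGb⟩ := deg_zero_lift (LL n d) h
  have hdn : d ≤ d * n := Nat.le_mul_of_pos_right d hn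
  let ρ : VV n d → EE d := fun z k => z ⟨k.1, by have := k.2; omega⟩
  have hρ : Continuous ρ := by
    refine continuous_pi fun k => ?_
    simp only [ρ]
    fun_prop
  have key : ∀ p, ∃ (v : T n d) (c : ℂ), (∀ i (k : Fin (n + 1)), 2 ≤ k.1 → (v i).1 k = 0) ∧
      c ≠ 0 ∧ g p = Pr n d v ∧ ρ (G p) = c • vals v := by
    intro p
    obtain ⟨v, hv, hvA⟩ := hg p
    have h1 := hGP p
    rw [← hv, LL_mk, PP_apply] at h1
    refine ⟨v, (inner ℂ (wv v) (wv v))⁻¹ * inner ℂ (wv v) (G p), hvA, ?_, hv.symm, ?_⟩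
    · intro h0
      rw [h0, zero_smul] at h1
      exact hG0 p h1.symm
    · rw [← h1]
      funext k
      simp only [ρ, PiLp.smul_apply, Pi.smul_apply]
      rw [h1]
      rfl
  have hne : ∀ p, ρ (G p) ≠ 0 := by
    intro p
    obtain ⟨v, c, hvA, hc, -, e2⟩ := key p
    rw [e2]
    exact smul_ne_zero hc (vals_ne hn v hvA)
  obtain ⟨q, hq, hqv⟩ := q_exists (n := n) d hn
  have hqg : ∀ p, q ⟨ρ (G p), hne p⟩ = g p := by
    intro p
    obtain ⟨v, c, hvA, hc, e1, e2⟩ := key p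
    rw [e1]
    exact hqv _ v c hvA e2
  let b : {y : EE d // y ≠ 0} := ⟨ρ (G 0), hne 0⟩
  let φ : Ω^ (Fin 2) {y : EE d // y ≠ 0} b := ⟨⟨fun p => ⟨ρ (G p), hne p⟩, by fun_prop⟩, by
    intro p hp
    refine Subtype.ext ?_
    change ρ (G p) = ρ (G 0)
    rw [hGb p hp, hGb 0 zero_bd]⟩
  have hfr : 3 < Module.finrank ℝ (EE d) := by
    rw [Module.finrank_pi_fintype]
    simp
    omega
  have hnull := null_punctured hfr b φ
  have h2 := ContinuousMap.HomotopicRel.comp_continuousMap hnull ⟨q, hq⟩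
  have e1 : (⟨q, hq⟩ : C(_, SP (CP n) d)).comp φ.1 = g.1 := by
    ext p
    exact hqg p
  have e2 : (⟨q, hq⟩ : C(_, SP (CP n) d)).comp (GenLoop.const (N := Fin 2) (x := b)).1
      = (GenLoop.const (N := Fin 2) (x := x0 n d)).1 := by
    ext p
    exact (hqg 0).trans (g.2 0 zero_bd)
  rw [e1, e2] at h2
  exact h2

lemma inj_part {n d : ℕ} (hn : 1 ≤ n) (hd : 1 ≤ d) (x : SP (CP n) d)
    (f : Ω^ (Fin 2) (SP (CP n) d) x) (e : VV n d) (h : Deg (LL n d) f e 0) :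
    GenLoop.Homotopic f GenLoop.const := by
  obtain ⟨γ, hγ, hγ0, hγ1⟩ := path_x0 d hn x
  obtain ⟨H, hH, h0, hb⟩ := drag f γ hγ hγ0
  let f' : Ω^ (Fin 2) (SP (CP n) d) (x0 n d) := ⟨⟨fun u => H (1, u), by fun_prop⟩, by
    intro u hu
    exact (hb 1 u hu).trans hγ1⟩
  have hh : (fun u => H (0, u)) = ⇑f := funext h0
  obtain ⟨e', he'⟩ := deg_free (LL n d) H hH γ hb (e := e) (k := 0) (by rw [hh]; exact h)
  have he2 : Deg (LL n d) f' e' 0 := he'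
  obtain ⟨g, hfg, hgA⟩ := into_AA d hn f'
  obtain ⟨e3, he3⟩ := deg_homotopic (LL n d) hfg he2
  have hgn := null_in_AA hn hd g hgA e3 he3
  have hf'n : GenLoop.Homotopic f' GenLoop.const := hfg.trans hgn
  exact null_of_drag f f' H hH γ h0 hb (fun u => rfl) hf'n

lemma wv_update {n d : ℕ} (v : T n d) (i : Fin d) (w : W n) (c : ℂ) (h : w.1 = c • (v i).1) :
    wv (Function.update v i w) = c • wv v := by
  ext k
  simp only [wv, PiLp.smul_apply, smul_eq_mul]
  rw [← Finset.mul_prod_erase Finset.univ _ (Finset.mem_univ i),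
    ← Finset.mul_prod_erase Finset.univ (fun i => ev (v i).1 ((k : ℕ) : ℂ)) (Finset.mem_univ i),
    Function.update_self, h, ev_smul, mul_assoc]
  congr 2
  refine Finset.prod_congr rfl fun j hj => ?_
  rw [Function.update_of_ne (Finset.ne_of_mem_erase hj)]

lemma Pr_update {n d : ℕ} (v : T n d) (i : Fin d) (w : W n) (c : ℂ) (hc : c ≠ 0)
    (h : w.1 = c • (v i).1) : Pr n d (Function.update v i w) = Pr n d v := by
  refine (Pr_eq _ _).2 ⟨Equiv.refl _, Function.update 1 i (Units.mk0 c hc), fun j => ?_⟩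
  by_cases hj : j = i
  · subst hj
    simpa [Units.smul_def] using h
  · simp [Function.update_of_ne hj]

lemma indep_exists {n : ℕ} (hn : 1 ≤ n) (v : W n) :
    ∃ w : Fin (n + 1) → ℂ, ∀ a b : ℂ, a • v.1 + b • w = 0 → a = 0 ∧ b = 0 := by
  obtain ⟨k, hk⟩ := Function.ne_iff.1 v.2
  have : Nontrivial (Fin (n + 1)) := Fin.nontrivial_iff_two_le.2 (by omega)
  obtain ⟨l, hl⟩ := exists_ne k
  refine ⟨Pi.single l 1, fun a b h => ?_⟩
  have h1 := congrFun h k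
  have ha : a = 0 := by
    simp [hl.symm] at h1
    exact h1.resolve_right (by simpa using hk)
  subst ha
  have h2 := congrFun h l
  simp at h2
  exact ⟨rfl, h2⟩

lemma surj_part {n d : ℕ} (hn : 1 ≤ n) (hd : 1 ≤ d) (x : SP (CP n) d) :
    ∃ (f : Ω^ (Fin 2) (SP (CP n) d) x) (e : VV n d), Deg (LL n d) f e 1 := by
  obtain ⟨v, rfl⟩ := (Pr_open n d).surjective x
  let i : Fin d := ⟨0, hd⟩
  obtain ⟨w, hw⟩ := indep_exists hn (v i)
  let E : I → ℂ := fun t => Complex.exp (2 * Real.pi * Complex.I * (t : ℝ))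
  have hE : Continuous E := by
    simp only [E]
    fun_prop
  have hE0 : E 0 = 1 := by simp [E]
  have hE1 : E 1 = 1 := by simp [E]
  have hEne : ∀ t, E t ≠ 0 := fun t => Complex.exp_ne_zero _
  let α : I × I → ℂ := fun p => 1 - (p.1 : ℝ) + (p.1 : ℝ) * E p.2
  let β : I × I → ℂ := fun p => (p.1 : ℝ) * (1 - (p.1 : ℝ)) * (p.2 : ℝ) * (1 - (p.2 : ℝ))
  have hα : Continuous α := by
    simp only [α]
    fun_prop
  have hβ : Continuous β := by
    simp only [β]
    fun_prop
  have hcase : ∀ p, β p = 0 → α p ≠ 0 := by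
    rintro ⟨s, t⟩ h
    simp only [β, mul_eq_zero, sub_eq_zero] at h
    rcases h with ((h | h) | h) | h
    · have : s = 0 := by ext; exact_mod_cast h
      simp [α, this]
    · have : s = 1 := by ext; exact_mod_cast h.symm
      simp [α, this, hEne]
    · have : t = 0 := by ext; exact_mod_cast h
      simp [α, this, hE0]
    · have : t = 1 := by ext; exact_mod_cast h.symm
      simp [α, this, hE1]
  have hne : ∀ p, α p • (v i).1 + β p • w ≠ 0 := by
    intro p h
    obtain ⟨h1, h2⟩ := hw _ _ h
    exact hcase p h2 h1
  let ft : I × I → T n d := fun p => Function.update v i ⟨α p • (v i).1 + β p • w, hne p⟩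
  have hft : Continuous ft := by
    refine continuous_const.update i ?_
    exact Continuous.subtype_mk (by fun_prop) _
  have hftb : ∀ p, β p = 0 → wv (ft p) = α p • wv v ∧ Pr n d (ft p) = Pr n d v := by
    intro p hp
    have e : α p • (v i).1 + β p • w = α p • (v i).1 := by rw [hp]; simp
    exact ⟨wv_update v i _ _ e, Pr_update v i _ _ (hcase p hp) e⟩
  let f : Ω^ (Fin 2) (SP (CP n) d) (Pr n d v) := ⟨⟨fun u => Pr n d (ft (u 0, u 1)),
    (Pr_open n d).continuous.comp (hft.comp (by fun_prop))⟩, by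
    rintro u ⟨j, hj⟩
    refine (hftb _ ?_).2
    fin_cases j
    · simp only [β]
      rcases hj with hj | hj
      · have : u 0 = 0 := hj
        simp [this]
      · have : u 0 = 1 := hj
        simp [this]
    · simp only [β]
      rcases hj with hj | hj
      · have : u 1 = 0 := hj
        simp [this]
      · have : u 1 = 1 := hj
        simp [this]⟩
  refine ⟨f, wv v, fun p => wv (ft p), wv_cont.comp hft, ?_, fun p => wv_ne _, ?_, ?_, ?_,
    fun t => 2 * Real.pi * Complex.I * (t : ℝ), by fun_prop, by simp, by simp, ?_⟩
  · intro p
    have : f ![p.1, p.2] = Pr n d (ft p) := rfl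
    rw [this, LL_mk]
    exact PP_self _ (wv_ne _)
  · intro t
    refine (hftb (0, t) (by simp [β])).1.trans ?_
    simp [α]
  · intro s
    refine (hftb (s, 0) (by simp [β])).1.trans ?_
    simp [α, hE0]
  · intro s
    refine (hftb (s, 1) (by simp [β])).1.trans ?_
    simp [α, hE1]
  · intro t
    refine (hftb (1, t) (by simp [β])).1.trans ?_
    simp [α, E]

end PiTwo

/-- **Corollary 3.7** (case `p = 0`, first assertion): for `d ≥ 1` and `n ≥ 1`,
`π₂(SP^d(ℂP^n)) ≅ ℤ`. -/
theorem pi_two_sp_cp (d n : ℕ) (hd : 1 ≤ d) (hn : 1 ≤ n) (x : SP (CP n) d) :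
    Nonempty ((π_ 2 (SP (CP n) d) x) ≃* Multiplicative ℤ) := by
  exact PiTwo.main_abstract (PiTwo.LL n d) x (PiTwo.surj_part hn hd x) (PiTwo.inj_part hn hd x)
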